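/- arXiv:1512.07518 — 6 statements merged into one kernel-verified Lean document; each statement's English description precedes it below -/
import Mathlib

section
/- For every s ∈ ℕ₀, every sequence (a_j)_{0 ≤ j ≤ 2^s} of complex numbers, and every j₀ ∈ {0, 1, …, 2^s}, one has max_{0 ≤ j ≤ 2^s} |a_j| ≤ |a_{j₀}| + √2 · Σ_{i=0}^{s} ( Σ_{j=0}^{2^{s−i}−1} |a_{(j+1)2^i} − a_{j2^i}|² )^{1/2}. -/
lemma aux_two (N : ℕ) (e : ℕ → ℝ) (u v : ℝ)
    (h : u ^ 2 + v ^ 2 ≤ ∑ l ∈ Finset.range N, e l ^ 2) :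
    u + v ≤ Real.sqrt 2 * Real.sqrt (∑ l ∈ Finset.range N, e l ^ 2) := by
  rw [← Real.sqrt_mul (by norm_num)]
  apply Real.le_sqrt_of_sq_le
  nlinarith [sq_nonneg (u - v)]

lemma aux_one_le (N : ℕ) (e : ℕ → ℝ) (p : ℕ) (hp : p < N) :
    e p ^ 2 ≤ ∑ l ∈ Finset.range N, e l ^ 2 :=
  Finset.single_le_sum (f := fun l => e l ^ 2) (fun i _ => sq_nonneg _) (Finset.mem_range.2 hp)

lemma aux_two_le (N : ℕ) (e : ℕ → ℝ) (p q : ℕ) (hp : p < N) (hq : q < N) (hpq : p ≠ q) :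
    e p ^ 2 + e q ^ 2 ≤ ∑ l ∈ Finset.range N, e l ^ 2 := by
  rw [← Finset.sum_pair (f := fun l => e l ^ 2) hpq]
  apply Finset.sum_le_sum_of_subset_of_nonneg
  · intro x hx
    simp only [Finset.mem_insert, Finset.mem_singleton] at hx
    rcases hx with rfl | rfl <;> simpa
  · intro i _ _
    exact sq_nonneg _

lemma aux_main (s : ℕ) : ∀ (a : ℕ → ℂ) (m n : ℕ), m ≤ n → n ≤ 2 ^ s →
    ‖a n - a m‖ ≤ Real.sqrt 2 *
      ∑ i ∈ Finset.range (s + 1),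
        Real.sqrt (∑ l ∈ Finset.range (2 ^ (s - i)),
          ‖a ((l + 1) * 2 ^ i) - a (l * 2 ^ i)‖ ^ 2) := by
  induction s with
  | zero =>
    intro a m n hmn hn
    rcases hmn.eq_or_lt with rfl | hlt
    · rw [sub_self, norm_zero]; positivity
    · obtain rfl : m = 0 := by simp at hn; omega
      obtain rfl : n = 1 := by simp at hn; omega
      have := aux_two 1 (fun l => ‖a (l + 1) - a l‖) ‖a 1 - a 0‖ 0 (by simp)
      simpa using this
  | succ s ih =>
    intro a m n hmn hn
    rcases hmn.eq_or_lt with rfl | hlt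
    · rw [sub_self, norm_zero]; positivity
    have h1 := ih (fun l => a (2 * l)) ((m + 1) / 2) (n / 2) (by omega)
      (by rw [pow_succ] at hn; omega)
    have key : ‖a n - a (2 * (n / 2))‖ + ‖a (2 * ((m + 1) / 2)) - a m‖ ≤
        Real.sqrt 2 * Real.sqrt (∑ l ∈ Finset.range (2 ^ (s + 1)), ‖a (l + 1) - a l‖ ^ 2) := by
      apply aux_two _ (fun l => ‖a (l + 1) - a l‖)
      rcases Nat.even_or_odd' n with ⟨p, rfl | rfl⟩ <;>
      rcases Nat.even_or_odd' m with ⟨q, rfl | rfl⟩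
      · rw [show 2 * (2 * p / 2) = 2 * p by omega, show 2 * ((2 * q + 1) / 2) = 2 * q by omega]
        have : 0 ≤ ∑ l ∈ Finset.range (2 ^ (s + 1)), ‖a (l + 1) - a l‖ ^ 2 := by positivity
        simpa using this
      · rw [show 2 * (2 * p / 2) = 2 * p by omega,
          show 2 * ((2 * q + 1 + 1) / 2) = 2 * q + 1 + 1 by omega]
        have := aux_one_le (2 ^ (s + 1)) (fun l => ‖a (l + 1) - a l‖) (2 * q + 1) (by omega)
        simpa using this
      · rw [show 2 * ((2 * p + 1) / 2) = 2 * p by omega,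
          show 2 * ((2 * q + 1) / 2) = 2 * q by omega]
        have := aux_one_le (2 ^ (s + 1)) (fun l => ‖a (l + 1) - a l‖) (2 * p) (by omega)
        simpa using this
      · rw [show 2 * ((2 * p + 1) / 2) = 2 * p by omega,
          show 2 * ((2 * q + 1 + 1) / 2) = 2 * q + 1 + 1 by omega]
        exact aux_two_le (2 ^ (s + 1)) (fun l => ‖a (l + 1) - a l‖) (2 * p) (2 * q + 1)
          (by omega) (by omega) (by omega)
    have tri : ‖a n - a m‖ ≤ ‖a (2 * (n / 2)) - a (2 * ((m + 1) / 2))‖ +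
        (‖a n - a (2 * (n / 2))‖ + ‖a (2 * ((m + 1) / 2)) - a m‖) := by
      have e : a n - a m = (a (2 * (n / 2)) - a (2 * ((m + 1) / 2))) +
        ((a n - a (2 * (n / 2))) + (a (2 * ((m + 1) / 2)) - a m)) := by ring
      rw [e]
      exact (norm_add_le _ _).trans (add_le_add le_rfl (norm_add_le _ _))
    rw [Finset.sum_range_succ', mul_add]
    refine tri.trans (add_le_add (h1.trans (le_of_eq ?_)) (key.trans (le_of_eq ?_)))
    · congr 1
      apply Finset.sum_congr rfl
      intro i _
      rw [Nat.add_sub_add_right]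
      congr 1
      apply Finset.sum_congr rfl
      intro l _
      rw [show 2 * ((l + 1) * 2 ^ i) = (l + 1) * 2 ^ (i + 1) by ring,
        show 2 * (l * 2 ^ i) = l * 2 ^ (i + 1) by ring]
    · simp


/-- **Rademacher–Menshov type numerical inequality.**
For any sequence `(a_j)_{0 ≤ j ≤ 2^s}` of complex numbers and any `j₀ ∈ {0,…,2^s}`,
`max_{0 ≤ j ≤ 2^s} |a_j| ≤ |a_{j₀}| + √2 Σ_{i=0}^{s} (Σ_{j=0}^{2^{s-i}-1}
|a_{(j+1)2^i} − a_{j 2^i}|²)^{1/2}`. -/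
theorem statement4 (s : ℕ) (a : ℕ → ℂ) (j₀ : ℕ) (hj₀ : j₀ ≤ 2 ^ s)
    (j : ℕ) (hj : j ≤ 2 ^ s) :
    ‖a j‖ ≤ ‖a j₀‖ + Real.sqrt 2 *
      ∑ i ∈ Finset.range (s + 1),
        Real.sqrt (∑ l ∈ Finset.range (2 ^ (s - i)),
          ‖a ((l + 1) * 2 ^ i) - a (l * 2 ^ i)‖ ^ 2) := by
  have h : ‖a j - a j₀‖ ≤ Real.sqrt 2 *
      ∑ i ∈ Finset.range (s + 1),
        Real.sqrt (∑ l ∈ Finset.range (2 ^ (s - i)),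
          ‖a ((l + 1) * 2 ^ i) - a (l * 2 ^ i)‖ ^ 2) := by
    rcases le_total j j₀ with hle | hle
    · rw [norm_sub_rev]
      exact aux_main s a j j₀ hle hj₀
    · exact aux_main s a j₀ j hle hj
  have h2 : ‖a j‖ ≤ ‖a j₀‖ + ‖a j - a j₀‖ := by
    have := norm_add_le (a j₀) (a j - a j₀)
    rwa [add_sub_cancel] at this
  exact h2.trans (add_le_add le_rfl h)
end

section
/- Suppose θ ∈ ℝ and a, q are integers with gcd(a, q) = 1 and |θ − a/q| ≤ 1/q², and suppose (log N)^β ≤ q ≤ N^j (log N)^{−β}. Let Q be a positive integer with Q ≤ (log N)^{β'} where β' < β, and let β₂ > 0 satisfy β₂ < β/2 and β₂ < β − β'. Then, provided N is sufficiently large (depending only on β, β', β₂), there exist integers a', q' with gcd(a', q') = 1 such that |Qθ − a'/q'| ≤ (log N)^{β₂} / (q' N^j) and (log N)^{β₂} ≤ q' ≤ N^j (log N)^{−β₂}. -/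
theorem core_aux (A B C M θ : ℝ) (a : ℤ) (q Q : ℕ) (hB : 1 ≤ B) (hC : 1 ≤ C)
    (hA : 2 * (B * C) < A) (hq : 0 < q) (hg : Int.gcd a q = 1)
    (h : |θ - (a : ℝ) / q| ≤ 1 / (q : ℝ) ^ 2) (h1 : A ≤ q) (h2 : q * A ≤ M)
    (hQ : 0 < Q) (hQB : (Q : ℝ) ≤ B) :
    ∃ (a' : ℤ) (q' : ℕ), 0 < q' ∧ Int.gcd a' q' = 1 ∧
      |(Q : ℝ) * θ - (a' : ℝ) / q'| ≤ C / ((q' : ℝ) * M) ∧ C ≤ (q' : ℝ) ∧ (q' : ℝ) ≤ M / C := by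
  have hC0 : 0 < C := by linarith
  have hB0 : 0 < B := by linarith
  have hCA : 2 * C < A := by nlinarith
  have hqR : (0 : ℝ) < q := by exact_mod_cast hq
  have hM : C ≤ M := by nlinarith
  have hM0 : 0 < M := by linarith
  have hX : 1 ≤ M / C := by rwa [le_div_iff₀ hC0, one_mul]
  have hn : 0 < ⌊M / C⌋₊ := Nat.floor_pos.2 hX
  obtain ⟨r, hr, hrd⟩ := Real.exists_rat_abs_sub_le_and_den_le ((Q : ℝ) * θ) hn
  have hd : (0 : ℝ) < r.den := by exact_mod_cast r.pos
  have hlt := Nat.lt_floor_add_one (M / C)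
  have hcast : (r : ℝ) = (r.num : ℝ) / (r.den : ℝ) := Rat.cast_def r
  have herr : |(Q : ℝ) * θ - (r.num : ℝ) / r.den| ≤ C / ((r.den : ℝ) * M) := by
    rw [← hcast]
    refine hr.trans ?_
    have : C / ((r.den : ℝ) * M) = 1 / ((M / C) * r.den) := by field_simp
    rw [this]
    gcongr
  refine ⟨r.num, r.den, r.pos, r.reduced, herr, ?_,
    (Nat.cast_le.2 hrd).trans (Nat.floor_le (by linarith))⟩
  by_contra! hlt'
  have hQd : (Q : ℝ) * r.den ≤ B * C := by gcongr
  by_cases heq : (Q : ℤ) * a * r.den - r.num * q = 0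
  · have hdv : (q : ℤ) ∣ a * ((Q : ℤ) * r.den) := ⟨r.num, by linear_combination heq⟩
    have hdv2 : (q : ℤ) ∣ (Q : ℤ) * r.den :=
      Int.dvd_of_dvd_mul_right_of_gcd_one hdv (by rw [Int.gcd_comm]; exact hg)
    have hle : (q : ℤ) ≤ (Q : ℤ) * r.den :=
      Int.le_of_dvd (by have := r.pos; positivity) hdv2
    have hle' : (q : ℝ) ≤ (Q : ℝ) * r.den := by exact_mod_cast hle
    have : 0 < B * C := by positivity
    linarith
  · have h1le : (1 : ℝ) ≤ |(Q : ℝ) * a * r.den - r.num * q| := by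
      exact_mod_cast Int.one_le_abs heq
    have hid : (Q : ℝ) * a * r.den - r.num * q
        = q * r.den * (((Q : ℝ) * θ - (r.num : ℝ) / r.den) - Q * (θ - (a : ℝ) / q)) := by
      field_simp
      ring
    rw [hid, abs_mul, abs_of_pos (by positivity : (0 : ℝ) < q * r.den)] at h1le
    have htri := abs_sub ((Q : ℝ) * θ - (r.num : ℝ) / r.den) (Q * (θ - (a : ℝ) / q))
    rw [abs_mul, Nat.abs_cast] at htri
    have hb : (q : ℝ) * r.den * (C / ((r.den : ℝ) * M) + Q * (1 / (q : ℝ) ^ 2))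
        = q * C / M + Q * r.den / q := by
      field_simp
    have h3 : (q : ℝ) * r.den * |((Q : ℝ) * θ - (r.num : ℝ) / r.den) - Q * (θ - (a : ℝ) / q)|
        ≤ (q : ℝ) * r.den * (C / ((r.den : ℝ) * M) + Q * (1 / (q : ℝ) ^ 2)) := by
      gcongr
      refine htri.trans ?_
      gcongr
    have h4 : (q : ℝ) * C / M < 1 / 2 := by
      rw [div_lt_iff₀ hM0]; nlinarith
    have h5 : (Q : ℝ) * r.den / q < 1 / 2 := by
      rw [div_lt_iff₀ hqR]; linarith
    linarith


/-- **Lemma on rational approximation of `Qθ` (Lemma 11).**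
If `|θ − a/q| ≤ 1/q²` with `gcd(a,q) = 1` and `(log N)^β ≤ q ≤ N^j (log N)^{−β}`, and if
`Q ≤ (log N)^{β'}` with `β' < β` and `β₂ < β/2`, `β₂ < β − β'`, then, for `N` sufficiently
large (depending only on `β, β', β₂`), there is a reduced fraction `a'/q'` with
`|Qθ − a'/q'| ≤ (log N)^{β₂}/(q' N^j)` and `(log N)^{β₂} ≤ q' ≤ N^j (log N)^{−β₂}`. -/
theorem statement8 (β β' β₂ : ℝ) (hβ'pos : 0 < β') (hβ' : β' < β) (hβ₂pos : 0 < β₂)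
    (hβ₂1 : β₂ < β / 2) (hβ₂2 : β₂ < β - β') :
    ∃ N₀ : ℕ, ∀ N : ℕ, N₀ ≤ N → ∀ j : ℕ, 1 ≤ j →
      ∀ (θ : ℝ) (a : ℤ) (q : ℕ), 0 < q → Int.gcd a q = 1 →
        |θ - (a : ℝ) / q| ≤ 1 / (q : ℝ) ^ 2 →
        Real.log N ^ β ≤ (q : ℝ) → (q : ℝ) ≤ (N : ℝ) ^ j * Real.log N ^ (-β) →
        ∀ Q : ℕ, 0 < Q → (Q : ℝ) ≤ Real.log N ^ β' →
          ∃ (a' : ℤ) (q' : ℕ), 0 < q' ∧ Int.gcd a' q' = 1 ∧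
            |(Q : ℝ) * θ - (a' : ℝ) / q'| ≤ Real.log N ^ β₂ / ((q' : ℝ) * (N : ℝ) ^ j) ∧
            Real.log N ^ β₂ ≤ (q' : ℝ) ∧ (q' : ℝ) ≤ (N : ℝ) ^ j * Real.log N ^ (-β₂) := by
  have ht : Filter.Tendsto (fun N : ℕ => Real.log N ^ (β - β' - β₂)) Filter.atTop Filter.atTop :=
    (tendsto_rpow_atTop (by linarith)).comp
      (Real.tendsto_log_atTop.comp tendsto_natCast_atTop_atTop)
  have hl : Filter.Tendsto (fun N : ℕ => Real.log N) Filter.atTop Filter.atTop :=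
    Real.tendsto_log_atTop.comp tendsto_natCast_atTop_atTop
  obtain ⟨N₀, hN₀⟩ := Filter.eventually_atTop.1
    ((ht.eventually_gt_atTop 2).and (hl.eventually_ge_atTop 1))
  refine ⟨N₀, fun N hN j _ θ a q hq hg h h1 h2 Q hQ hQB => ?_⟩
  obtain ⟨hbig, hL⟩ := hN₀ N hN
  have hL0 : 0 < Real.log N := by linarith
  have hA0 : 0 < Real.log N ^ β := Real.rpow_pos_of_pos hL0 _
  have hB0 : 0 < Real.log N ^ β' := Real.rpow_pos_of_pos hL0 _
  have hC0 : 0 < Real.log N ^ β₂ := Real.rpow_pos_of_pos hL0 _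
  rw [Real.rpow_sub hL0, Real.rpow_sub hL0, div_div, lt_div_iff₀ (by positivity)] at hbig
  rw [Real.rpow_neg hL0.le, ← div_eq_mul_inv, le_div_iff₀ hA0] at h2
  rw [Real.rpow_neg hL0.le, ← div_eq_mul_inv]
  exact core_aux _ _ _ _ θ a q Q (Real.one_le_rpow hL hβ'pos.le) (Real.one_le_rpow hL hβ₂pos.le)
    hbig hq hg h h1 h2 hQ hQB
end

section
/- For all k, N ∈ ℕ with N ≥ k there exists a family of at most ⌈(k^{k+1}/k!)·log(eN/k)⌉ + 1 partitions of {1,…,N} with the following properties: (i) each partition in the family consists of k pairwise disjoint nonempty subsets N₁,…,N_k with {1,…,N} = N₁ ∪ ⋯ ∪ N_k; (ii) for every subset E ⊆ {1,…,N} with at least k elements there is a partition {N₁,…,N_k} in the family such that E ∩ N_j ≠ ∅ for every j = 1,…,k. In particular, for every k there is a constant C_k > 0 independent of N such that at most C_k · log(N+1) partitions suffice. -/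
open Finset in
lemma aux_count {α : Type*} [Fintype α] [DecidableEq α] (k : ℕ) (E : Finset α) (hE : E.card = k) :
    k.factorial * k ^ (Fintype.card α - k) ≤
      (univ.filter (fun f : α → Fin k => ∀ j, ∃ x ∈ E, f x = j)).card := by
  classical
  have h1 : Fintype.card ((E ↪ Fin k) × ({x // x ∉ E} → Fin k)) =
      k.factorial * k ^ (Fintype.card α - k) := by
    rw [Fintype.card_prod, Fintype.card_embedding_eq, Fintype.card_fun]
    simp [hE, Nat.descFactorial_self, Fintype.card_subtype_compl]
  rw [← h1, ← Fintype.card_coe]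
  let e := (Equiv.piEquivPiSubtypeProd (fun x => x ∈ E) (fun _ : α => Fin k)).symm
  have he : ∀ (p : (E ↪ Fin k) × ({x // x ∉ E} → Fin k)) (x : α) (hx : x ∈ E),
      e (p.1, p.2) x = p.1 ⟨x, hx⟩ := by
    intro p x hx
    simp [e, Equiv.piEquivPiSubtypeProd, hx]
  refine Fintype.card_le_of_injective (fun p => ⟨e (p.1, p.2), ?_⟩) ?_
  · rw [mem_filter]
    refine ⟨mem_univ _, fun j => ?_⟩
    have hb : Function.Bijective p.1 := by
      rw [Fintype.bijective_iff_injective_and_card]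
      exact ⟨p.1.injective, by simp [hE]⟩
    obtain ⟨⟨x, hx⟩, hxj⟩ := hb.2 j
    exact ⟨x, hx, by rw [he p x hx, hxj]⟩
  · rintro ⟨a, b⟩ ⟨c, d⟩ h
    have h2 := e.injective (Subtype.ext_iff.1 h)
    simp only [Prod.mk.injEq] at h2 ⊢
    exact ⟨DFunLike.coe_injective h2.1, h2.2⟩

open Finset in
lemma aux_step {α : Type*} [Fintype α] [DecidableEq α] (k : ℕ) (hk : 1 ≤ k)
    (hkN : k ≤ Fintype.card α) (U : Finset (Finset α)) (hU : ∀ E ∈ U, E.card = k) :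
    ∃ f : α → Fin k,
      (U.card : ℝ) * ((k.factorial : ℝ) / (k : ℝ) ^ k) ≤
        ((U.filter (fun E => ∀ j, ∃ x ∈ E, f x = j)).card : ℝ) := by
  classical
  haveI : Nonempty (Fin k) := ⟨⟨0, hk⟩⟩
  have hk0 : (0 : ℝ) < k := by exact_mod_cast hk
  have hsum : ∑ f : α → Fin k, (U.filter (fun E => ∀ j, ∃ x ∈ E, f x = j)).card
      = ∑ E ∈ U, (univ.filter (fun f : α → Fin k => ∀ j, ∃ x ∈ E, f x = j)).card := by
    simp only [card_filter]
    exact sum_comm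
  have hlow : U.card * (k.factorial * k ^ (Fintype.card α - k)) ≤
      ∑ f : α → Fin k, (U.filter (fun E => ∀ j, ∃ x ∈ E, f x = j)).card := by
    rw [hsum, ← smul_eq_mul]
    exact card_nsmul_le_sum _ _ _ (fun E hE => aux_count k E (hU E hE))
  have hlow' : (U.card : ℝ) * (k.factorial * k ^ (Fintype.card α - k)) ≤
      ∑ f : α → Fin k, ((U.filter (fun E => ∀ j, ∃ x ∈ E, f x = j)).card : ℝ) := by
    exact_mod_cast hlow
  obtain ⟨f, -, hf⟩ := exists_le_of_sum_le (s := (univ : Finset (α → Fin k)))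
    (f := fun _ => (U.card : ℝ) * ((k.factorial : ℝ) / (k : ℝ) ^ k)) 
    (g := fun f : α → Fin k => ((U.filter (fun E => ∀ j, ∃ x ∈ E, f x = j)).card : ℝ))
    univ_nonempty (by
      refine le_trans (le_of_eq ?_) hlow'
      rw [sum_const, card_univ, Fintype.card_fun, Fintype.card_fin, nsmul_eq_mul]
      obtain ⟨m, hm⟩ := Nat.exists_eq_add_of_le hkN
      rw [hm, Nat.add_sub_cancel_left]
      push_cast
      rw [pow_add]
      field_simp)
  exact ⟨f, hf⟩

open Finset in
lemma aux_greedy {α : Type*} [Fintype α] [DecidableEq α] (k : ℕ) (hk : 1 ≤ k)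
    (hkN : k ≤ Fintype.card α) (r : ℕ) : ∀ (U : Finset (Finset α)) (_ : ∀ E ∈ U, E.card = k)
    (_ : (U.card : ℝ) * (1 - (k.factorial : ℝ) / (k : ℝ) ^ k) ^ r < 1),
    ∃ F : Fin r → α → Fin k, ∀ E ∈ U, ∃ a, ∀ j, ∃ x ∈ E, F a x = j := by
  classical
  induction r with
  | zero =>
    intro U hU h
    refine ⟨fun a => a.elim0, fun E hE => ?_⟩
    have : 0 < U.card := card_pos.2 ⟨E, hE⟩
    have : (1 : ℝ) ≤ U.card := by exact_mod_cast this
    simp at h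
    subst h
    simp at hE
  | succ r ih =>
    intro U hU h
    have hk0 : (0 : ℝ) < (k : ℝ) ^ k := by have : (0 : ℝ) < k := by exact_mod_cast hk
                                           positivity
    have hp : (k.factorial : ℝ) / (k : ℝ) ^ k ≤ 1 := by
      rw [div_le_one hk0]
      exact_mod_cast Nat.factorial_le_pow k
    obtain ⟨f, hf⟩ := aux_step k hk hkN U hU
    obtain ⟨F, hF⟩ := ih (U.filter (fun E => ¬ ∀ j, ∃ x ∈ E, f x = j))
      (fun E hE => hU E (mem_filter.1 hE).1) (by
        refine lt_of_le_of_lt ?_ h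
        rw [pow_succ', ← mul_assoc]
        refine mul_le_mul_of_nonneg_right ?_ (pow_nonneg (by linarith) _)
        have := card_filter_add_card_filter_not (s := U) (fun E => ∀ j, ∃ x ∈ E, f x = j)
        have h3 : ((U.filter (fun E => ∀ j, ∃ x ∈ E, f x = j)).card : ℝ) +
          ((U.filter (fun E => ¬ ∀ j, ∃ x ∈ E, f x = j)).card : ℝ) = U.card := by
          exact_mod_cast this
        linarith)
    refine ⟨Fin.cons f F, fun E hE => ?_⟩
    by_cases hc : ∀ j, ∃ x ∈ E, f x = j
    · exact ⟨0, by simpa using hc⟩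
    · obtain ⟨a, ha⟩ := hF E (mem_filter.2 ⟨hE, hc⟩)
      exact ⟨a.succ, by simpa using ha⟩

lemma aux_bound (k N : ℕ) (hk : 1 ≤ k) (hkN : k ≤ N) :
    ((N.choose k : ℕ) : ℝ) * (1 - (k.factorial : ℝ) / (k : ℝ) ^ k) ^
      (⌈((k : ℝ) ^ (k + 1) / (Nat.factorial k : ℝ)) *
            Real.log (Real.exp 1 * (N : ℝ) / (k : ℝ))⌉₊ + 1) < 1 := by
  have hk0 : (0 : ℝ) < k := by exact_mod_cast hk
  have hN0 : (0 : ℝ) < N := by exact_mod_cast (lt_of_lt_of_le hk hkN)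
  have hf0 : (0 : ℝ) < k.factorial := by exact_mod_cast k.factorial_pos
  have hkk : (0 : ℝ) < (k : ℝ) ^ k := by positivity
  set x := Real.exp 1 * (N : ℝ) / (k : ℝ) with hx
  have hx0 : 0 < x := by positivity
  set r := ⌈((k : ℝ) ^ (k + 1) / (Nat.factorial k : ℝ)) * Real.log x⌉₊ + 1 with hr
  have hrr : ((k : ℝ) ^ (k + 1) / (Nat.factorial k : ℝ)) * Real.log x < r := by
    have := Nat.le_ceil (((k : ℝ) ^ (k + 1) / (Nat.factorial k : ℝ)) * Real.log x)
    rw [hr]; push_cast; linarith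
  set p := (k.factorial : ℝ) / (k : ℝ) ^ k with hp
  have hp0 : 0 < p := by positivity
  have hp1 : p ≤ 1 := by
    rw [hp, div_le_one hkk]
    exact_mod_cast Nat.factorial_le_pow k
  have hlog : k * Real.log x < p * r := by
    have := mul_lt_mul_of_pos_left hrr hp0
    refine lt_of_eq_of_lt ?_ this
    rw [hp, pow_succ]; field_simp
  have hch : ((N.choose k : ℕ) : ℝ) ≤ x ^ k := by
    refine (Nat.choose_le_pow_div k N).trans ?_
    have h1 := Real.pow_div_factorial_le_exp (k : ℝ) hk0.le k
    have h2 : Real.exp (k : ℝ) = Real.exp 1 ^ k := by rw [← Real.exp_nat_mul]; simp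
    rw [h2, div_le_iff₀ hf0] at h1
    rw [hx, div_pow, mul_pow, div_le_div_iff₀ hf0 hkk]
    nlinarith [pow_pos hN0 k]
  have hxk : x ^ k = Real.exp (k * Real.log x) := by
    rw [Real.exp_nat_mul, Real.exp_log hx0]
  have hpow : (1 - p) ^ r ≤ Real.exp (-(p * r)) := by
    have : 1 - p ≤ Real.exp (-p) := Real.one_sub_le_exp_neg p
    calc (1 - p) ^ r ≤ Real.exp (-p) ^ r := pow_le_pow_left₀ (by linarith) this r
      _ = _ := by rw [← Real.exp_nat_mul]; ring_nf
  calc _ ≤ x ^ k * Real.exp (-(p * r)) := 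
        mul_le_mul hch hpow (pow_nonneg (by linarith) _) (by positivity)
    _ = Real.exp (k * Real.log x + -(p * r)) := by rw [hxk, Real.exp_add]
    _ < 1 := by rw [Real.exp_lt_one_iff]; linarith


/-- **Partition lemma (Lemma 31).** For `1 ≤ k ≤ N` there is a family of at most
`⌈(k^{k+1}/k!)·log(eN/k)⌉ + 1` partitions of `{1,…,N}` into `k` pairwise disjoint nonempty
subsets such that every `E ⊆ {1,…,N}` with at least `k` elements meets every block of at
least one partition in the family. -/
theorem statement12 (k N : ℕ) (hk : 1 ≤ k) (hkN : k ≤ N) :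
    ∃ (r : ℕ) (π : Fin r → Fin k → Finset ℕ),
      r ≤ ⌈((k : ℝ) ^ (k + 1) / (Nat.factorial k : ℝ)) *
            Real.log (Real.exp 1 * (N : ℝ) / (k : ℝ))⌉₊ + 1 ∧
      (∀ a : Fin r,
        (∀ j, (π a j).Nonempty) ∧
        (Set.univ : Set (Fin k)).PairwiseDisjoint (fun j => π a j) ∧
        Finset.univ.biUnion (π a) = Finset.Icc 1 N) ∧
      (∀ E : Finset ℕ, E ⊆ Finset.Icc 1 N → k ≤ E.card →
        ∃ a : Fin r, ∀ j : Fin k, (E ∩ π a j).Nonempty) := by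


  classical
  set r := ⌈((k : ℝ) ^ (k + 1) / (Nat.factorial k : ℝ)) *
            Real.log (Real.exp 1 * (N : ℝ) / (k : ℝ))⌉₊ + 1 with hr
  have inst1 : Fintype {x : ℕ // x ∈ Finset.Icc 1 N} := Finset.fintypeCoeSort _
  have hcard : Fintype.card {x : ℕ // x ∈ Finset.Icc 1 N} = N := by simp
  obtain ⟨F, hF⟩ := aux_greedy (α := {x : ℕ // x ∈ Finset.Icc 1 N}) k hk (by omega) r
    (Finset.powersetCard k Finset.univ) (fun E hE => (Finset.mem_powersetCard.1 hE).2) (by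
      rw [Finset.card_powersetCard, Finset.card_univ, hcard]
      exact aux_bound k N hk hkN)
  obtain ⟨g, hg⟩ : ∃ g : {x : ℕ // x ∈ Finset.Icc 1 N} → Fin k, Function.Surjective g := by
    haveI : Nonempty (Fin k) := ⟨⟨0, hk⟩⟩
    obtain ⟨i⟩ : Nonempty (Fin k ↪ {x : ℕ // x ∈ Finset.Icc 1 N}) :=
      Function.Embedding.nonempty_of_card_le (by simp [hcard, hkN])
    exact ⟨Function.invFun i, Function.invFun_surjective i.injective⟩
  let G : Fin r → {x : ℕ // x ∈ Finset.Icc 1 N} → Fin k := fun a => if Function.Surjective (F a) then F a else g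
  have hG : ∀ a, Function.Surjective (G a) := by
    intro a
    by_cases h : Function.Surjective (F a)
    · simpa [G, h] using h
    · simpa [G, h] using hg
  have hmem : ∀ a j n, n ∈ ((Finset.univ.filter (fun x : {x : ℕ // x ∈ Finset.Icc 1 N} => G a x = j)).image Subtype.val) ↔
      ∃ h : n ∈ Finset.Icc 1 N, G a ⟨n, h⟩ = j := by
    intro a j n
    rw [Finset.mem_image]
    constructor
    · rintro ⟨⟨x, hx⟩, h, rfl⟩
      exact ⟨hx, (Finset.mem_filter.1 h).2⟩
    · rintro ⟨h, h'⟩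
      exact ⟨⟨n, h⟩, Finset.mem_filter.2 ⟨Finset.mem_univ _, h'⟩, rfl⟩
  refine ⟨r, fun a j => (Finset.univ.filter (fun x : {x : ℕ // x ∈ Finset.Icc 1 N} => G a x = j)).image Subtype.val,
    le_refl _, fun a => ⟨fun j => ?_, ?_, ?_⟩, fun E hE hkE => ?_⟩
  · obtain ⟨⟨x, hx⟩, h⟩ := hG a j
    exact ⟨x, (hmem a j x).2 ⟨hx, h⟩⟩
  · intro i _ j _ hij
    refine Finset.disjoint_left.2 fun n hn hn' => hij ?_
    obtain ⟨h, h1⟩ := (hmem a i n).1 hn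
    obtain ⟨_, h2⟩ := (hmem a j n).1 hn'
    exact h1.symm.trans h2
  · ext n
    rw [Finset.mem_biUnion]
    constructor
    · rintro ⟨j, _, h⟩
      exact ((hmem a j n).1 h).1
    · intro h
      exact ⟨G a ⟨n, h⟩, Finset.mem_univ _, (hmem a _ n).2 ⟨h, rfl⟩⟩
  · obtain ⟨T, hTE, hT⟩ := Finset.exists_subset_card_eq hkE
    obtain ⟨a, ha⟩ := hF (T.subtype (fun x => x ∈ Finset.Icc 1 N)) (by
      rw [Finset.mem_powersetCard]
      refine ⟨Finset.subset_univ _, ?_⟩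
      rw [Finset.card_subtype, Finset.filter_true_of_mem (fun x hx => hE (hTE hx)), hT])
    have hs : Function.Surjective (F a) := fun j => by
      obtain ⟨x, _, h⟩ := ha j
      exact ⟨x, h⟩
    refine ⟨a, fun j => ?_⟩
    obtain ⟨x, hx, h⟩ := ha j
    refine ⟨x.1, Finset.mem_inter.2 ⟨hTE (Finset.mem_subtype.1 hx), (hmem a j x.1).2 ⟨x.2, ?_⟩⟩⟩
    simpa [G, hs] using h
end

section
/- For every ρ > 0 there exists a constant C_ρ > 0 such that for every N ∈ ℕ the set 𝒰_N can be written as a disjoint union of at most C_ρ · log(N+2) sets 𝒰_N^i = R(P_N^i), where P_N^i = { q = Q·w : Q divides Q₀ and w ∈ Λ_i } and each Λ_i ⊆ Π(ℙ_N) ∪ {1} has the O property. -/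
noncomputable section

/-- `D = ⌊2/ρ⌋ + 1`. -/
def DIW (ρ : ℝ) : ℕ := ⌊2 / ρ⌋₊ + 1

/-- `N₀ = ⌊N^{ρ/2}⌋ + 1`. -/
def NzeroIW (ρ : ℝ) (N : ℕ) : ℕ := ⌊(N : ℝ) ^ (ρ / 2)⌋₊ + 1

/-- `Q₀ = (N₀!)^D`. -/
def QzeroIW (ρ : ℝ) (N : ℕ) : ℕ := (Nat.factorial (NzeroIW ρ N)) ^ (DIW ρ)

/-- `ℙ_N`, the primes `p` with `N₀ < p ≤ N`. -/
def primesIW (ρ : ℝ) (N : ℕ) : Set ℕ := {p | p.Prime ∧ NzeroIW ρ N < p ∧ p ≤ N}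

/-- `Π(V)`: all products of at most `D` distinct prime factors from `V`, at powers
between `1` and `D`. -/
def PiProdIW (D : ℕ) (V : Set ℕ) : Set ℕ :=
  {w | ∃ k : ℕ, 1 ≤ k ∧ k ≤ D ∧
    ∃ p γ : Fin k → ℕ, (∀ l, p l ∈ V) ∧ Function.Injective p ∧
      (∀ l, 1 ≤ γ l ∧ γ l ≤ D) ∧ w = ∏ l, p l ^ γ l}

/-- `A_q = {a ∈ {1,…,q}^d : gcd(q, gcd(a₁,…,a_d)) = 1}`. -/
def AqIW (d q : ℕ) : Set (Fin d → ℕ) :=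
  {a | (∀ i, 1 ≤ a i ∧ a i ≤ q) ∧ Nat.gcd q (Finset.univ.gcd a) = 1}

/-- `R(S)`, the fractions `a/q ∈ T^d ∩ ℚ^d` with `a ∈ A_q`, `q ∈ S`. -/
def RfracIW (d : ℕ) (S : Set ℕ) : Set (Fin d → ℚ) :=
  {v | ∃ q ∈ S, ∃ a ∈ AqIW d q, v = fun i => (a i : ℚ) / (q : ℚ)}

/-- `𝒰_N = R(P_N)` where `P_N = {Q·w : Q ∣ Q₀, w ∈ Π(ℙ_N) ∪ {1}}`. -/
def UNIW (ρ : ℝ) (d N : ℕ) : Set (Fin d → ℚ) :=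
  RfracIW d {q | ∃ Q w : ℕ, Q ∣ QzeroIW ρ N ∧
    (w ∈ PiProdIW (DIW ρ) (primesIW ρ N) ∨ w = 1) ∧ q = Q * w}

/-- A set `Λ ⊆ Π(V) ∪ {1}` has the `O` property. -/
def HasOProp (D : ℕ) (V : Set ℕ) (Λ : Set ℕ) : Prop :=
  Λ = {1} ∨
    ∃ k : ℕ, 1 ≤ k ∧ k ≤ D ∧
      ∃ S : Fin k → Finset ℕ,
        (∀ j, (S j).Nonempty) ∧
        (∀ j, ∃ γ : ℕ, 1 ≤ γ ∧ γ ≤ D ∧ ∀ q ∈ S j, ∃ p ∈ V, q = p ^ γ) ∧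
        (∀ w ∈ Λ, ∃! c : Fin k → ℕ, (∀ j, c j ∈ S j) ∧ w = ∏ j, c j) ∧
        (∀ (j j' : Fin k) (q q' : ℕ), q ∈ S j → q' ∈ S j' →
          (j, q) ≠ (j', q') → Nat.Coprime q q')

lemma hash_step (n k : ℕ) (hk : 1 ≤ k) (X : Finset (Fin k → Fin n))
    (hX : ∀ p ∈ X, Function.Injective p) :
    ∃ f : Fin n → Fin k, X.card ≤ k ^ k * (X.filter (fun p => ∀ j, f (p j) = j)).card := by
  classical
  haveI : NeZero k := ⟨by omega⟩
  have key : ∀ p ∈ X, Fintype.card (Fin n → Fin k) ≤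
      k ^ k * (Finset.univ.filter (fun f : Fin n → Fin k => ∀ j, f (p j) = j)).card := by
    intro p hp
    have hi := hX p hp
    let φ : (Fin n → Fin k) → (Fin k → Fin k) × {f : Fin n → Fin k // ∀ j, f (p j) = j} :=
      fun F => (F ∘ p, ⟨Function.extend p id F, fun j => by simp [hi.extend_apply]⟩)
    have hφ : Function.Injective φ := by
      intro F G h
      have h1 : F ∘ p = G ∘ p := congrArg Prod.fst h
      have h2 : Function.extend p id F = Function.extend p id G :=
        congrArg Subtype.val (congrArg Prod.snd h)
      funext x
      by_cases hx : ∃ j, p j = x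
      · obtain ⟨j, rfl⟩ := hx
        exact congrFun h1 j
      · have := congrFun h2 x
        rwa [Function.extend_apply' _ _ _ hx, Function.extend_apply' _ _ _ hx] at this
    have := Fintype.card_le_of_injective φ hφ
    rw [Fintype.card_prod, Fintype.card_subtype] at this
    simpa using this
  by_contra! hcon
  have h1 : ∑ f : Fin n → Fin k, k ^ k * (X.filter (fun p => ∀ j, f (p j) = j)).card
      < ∑ f : Fin n → Fin k, X.card :=
    Finset.sum_lt_sum_of_nonempty Finset.univ_nonempty (fun f _ => hcon f)
  have h2 : ∑ f : Fin n → Fin k, (X.filter (fun p => ∀ j, f (p j) = j)).card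
      = ∑ p ∈ X, (Finset.univ.filter (fun f : Fin n → Fin k => ∀ j, f (p j) = j)).card := by
    simp only [Finset.card_filter]
    exact Finset.sum_comm
  rw [← Finset.mul_sum, h2, Finset.mul_sum] at h1
  have h3 := Finset.sum_le_sum key
  simp only [Finset.sum_const, smul_eq_mul, Finset.card_univ] at h1 h3
  rw [mul_comm] at h3
  omega

lemma hash_iter (n k : ℕ) (hk : 1 ≤ k) (K : ℕ) (hK : k ^ k ≤ K) (M : ℕ)
    (X : Finset (Fin k → Fin n)) (hX : ∀ p ∈ X, Function.Injective p) :
    ∃ f : Fin M → Fin n → Fin k,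
      ((X.filter (fun p => ∀ i, ¬ ∀ j, f i (p j) = j)).card : ℝ)
        ≤ (1 - 1 / (K : ℝ)) ^ M * X.card := by
  classical
  have hkk : 1 ≤ k ^ k := Nat.one_le_pow _ _ hk
  have hK1 : (1 : ℝ) ≤ K := by exact_mod_cast hkk.trans hK
  have h0 : 0 ≤ 1 - 1 / (K : ℝ) := by
    have : 1 / (K : ℝ) ≤ 1 := by rw [div_le_one (by linarith)]; exact hK1
    linarith
  induction M generalizing X with
  | zero => exact ⟨Fin.elim0, by simp⟩
  | succ M ih =>
    obtain ⟨f0, hf0⟩ := hash_step n k hk X hX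
    obtain ⟨f, hf⟩ := ih (X.filter (fun p => ¬ ∀ j, f0 (p j) = j))
      (fun p hp => hX p (Finset.mem_filter.1 hp).1)
    refine ⟨Fin.cons f0 f, ?_⟩
    have e : X.filter (fun p => ∀ i, ¬ ∀ j, (Fin.cons f0 f : Fin (M+1) → Fin n → Fin k) i (p j) = j)
      = (X.filter (fun p => ¬ ∀ j, f0 (p j) = j)).filter (fun p => ∀ i, ¬ ∀ j, f i (p j) = j) := by
      ext p
      simp only [Finset.mem_filter, Fin.forall_fin_succ, Fin.cons_zero, Fin.cons_succ, and_assoc]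
    rw [e]
    refine hf.trans ?_
    rw [pow_succ, mul_assoc]
    refine mul_le_mul_of_nonneg_left ?_ (pow_nonneg h0 _)
    have hs := Finset.card_filter_add_card_filter_not (s := X) (fun p => ∀ j, f0 (p j) = j)
    have hs' : ((X.filter (fun p => ∀ j, f0 (p j) = j)).card : ℝ) +
      (X.filter (fun p => ¬ ∀ j, f0 (p j) = j)).card = X.card := by exact_mod_cast hs
    have h4 : (X.card : ℝ) ≤ K * (X.filter (fun p => ∀ j, f0 (p j) = j)).card := by
      exact_mod_cast hf0.trans (Nat.mul_le_mul_right _ hK)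
    have h5 : 1 / (K : ℝ) * X.card ≤ (X.filter (fun p => ∀ j, f0 (p j) = j)).card := by
      rw [one_div, inv_mul_le_iff₀ (by linarith)]; exact h4
    linarith

lemma hash_exists (n k : ℕ) (hk : 1 ≤ k) (K : ℕ) (hK : k ^ k ≤ K) (M : ℕ)
    (hM : (1 - 1 / (K : ℝ)) ^ M * (n : ℝ) ^ k < 1) :
    ∃ f : Fin M → Fin n → Fin k, ∀ p : Fin k → Fin n, Function.Injective p →
      ∃ i, ∀ j, f i (p j) = j := by
  classical
  obtain ⟨f, hf⟩ := hash_iter n k hk K hK M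
    (Finset.univ.filter (fun p : Fin k → Fin n => Function.Injective p))
    (fun p hp => (Finset.mem_filter.1 hp).2)
  refine ⟨f, fun p hp => ?_⟩
  by_contra hcon
  have hkk : 1 ≤ k ^ k := Nat.one_le_pow _ _ hk
  have hK1 : (1 : ℝ) ≤ K := by exact_mod_cast hkk.trans hK
  have h0 : 0 ≤ 1 - 1 / (K : ℝ) := by
    have : 1 / (K : ℝ) ≤ 1 := by rw [div_le_one (by linarith)]; exact hK1
    linarith
  have hc : ((Finset.univ.filter (fun p : Fin k → Fin n => Function.Injective p)).card : ℝ)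
      ≤ (n : ℝ) ^ k := by
    have := Finset.card_filter_le (Finset.univ) (fun p : Fin k → Fin n => Function.Injective p)
    rw [Finset.card_univ] at this
    simp only [Fintype.card_fun, Fintype.card_fin] at this
    exact_mod_cast this
  have h1 := (hf.trans (mul_le_mul_of_nonneg_left hc (pow_nonneg h0 M))).trans_lt hM
  have h2 : (Finset.filter (fun p => ∀ i, ¬ ∀ j, f i (p j) = j)
    (Finset.univ.filter (fun p : Fin k → Fin n => Function.Injective p))).card < 1 := by
    exact_mod_cast h1
  have h3 : p ∈ (Finset.filter (fun p => ∀ i, ¬ ∀ j, f i (p j) = j)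
    (Finset.univ.filter (fun p : Fin k → Fin n => Function.Injective p))) := by
    simp only [Finset.mem_filter, Finset.mem_univ, true_and]
    exact ⟨hp, fun i hi => hcon ⟨i, hi⟩⟩
  have := Finset.card_pos.2 ⟨p, h3⟩
  omega

lemma aq_dvd {d q r : ℕ} (hq : q ≠ 0) (hr : r ≠ 0) {a b : Fin d → ℕ} (ha : a ∈ AqIW d q)
    (h : ∀ i, (a i : ℚ) / q = (b i : ℚ) / r) : q ∣ r := by
  have h1 : ∀ i, q ∣ a i * r := by
    intro i
    have := h i
    rw [div_eq_div_iff (by exact_mod_cast hq) (by exact_mod_cast hr)] at this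
    exact ⟨b i, by rw [mul_comm q]; exact_mod_cast this⟩
  have h2 : q ∣ Finset.univ.gcd a * r := by
    have h3 : q ∣ Finset.univ.gcd (fun i => a i * r) := Finset.dvd_gcd (fun i _ => h1 i)
    rwa [Finset.gcd_mul_right, normalize_eq] at h3
  exact Nat.Coprime.dvd_of_dvd_mul_left ha.2 h2

lemma hasO_of_color (D : ℕ) (V : Set ℕ) (N : ℕ) (hV : ∀ p ∈ V, p.Prime ∧ p ≤ N) (hne : V.Nonempty)
    (hD : 1 ≤ D) (k : ℕ) (hk : 1 ≤ k) (hkD : k ≤ D) (γ : Fin k → ℕ)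
    (hγ : ∀ j, 1 ≤ γ j ∧ γ j ≤ D) (f : ℕ → Fin k) (Λ : Set ℕ)
    (hΛ : ∀ w ∈ Λ, ∃ p : Fin k → ℕ, (∀ j, p j ∈ V) ∧ (∀ j, f (p j) = j) ∧ w = ∏ j, p j ^ γ j) :
    HasOProp D V Λ := by
  classical
  right
  rcases Λ.eq_empty_or_nonempty with rfl | ⟨w0, hw0⟩
  · obtain ⟨p, hp⟩ := hne
    refine ⟨1, le_rfl, hD, fun _ => {p}, by simp, fun _ => ⟨1, le_rfl, hD, ?_⟩, by simp, ?_⟩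
    · intro q hq
      exact ⟨p, hp, by simpa using hq⟩
    · intro j j' q q' hq hq' hn
      simp only [Finset.mem_singleton] at hq hq'
      exact absurd (by rw [hq, hq', Subsingleton.elim j j']) hn
  · let S : Fin k → Finset ℕ := fun j =>
      ((Finset.range (N + 1)).filter (fun p => p ∈ V ∧ f p = j)).image (fun p => p ^ γ j)
    have hS : ∀ j q, q ∈ S j ↔ ∃ p ∈ V, f p = j ∧ q = p ^ γ j := by
      intro j q
      simp only [S, Finset.mem_image, Finset.mem_filter, Finset.mem_range]
      constructor
      · rintro ⟨p, ⟨_, h1, h2⟩, rfl⟩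
        exact ⟨p, h1, h2, rfl⟩
      · rintro ⟨p, h1, h2, rfl⟩
        exact ⟨p, ⟨by have := (hV p h1).2; omega, h1, h2⟩, rfl⟩
    have hcop : ∀ (j j' : Fin k) (q q' : ℕ), q ∈ S j → q' ∈ S j' →
          (j, q) ≠ (j', q') → Nat.Coprime q q' := by
      intro j j' q q' hq hq' hn
      rw [hS] at hq hq'
      obtain ⟨p, hp, hfp, rfl⟩ := hq
      obtain ⟨p', hp', hfp', rfl⟩ := hq'
      apply Nat.Coprime.pow
      rw [Nat.coprime_primes (hV p hp).1 (hV p' hp').1]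
      rintro rfl
      apply hn
      have : j = j' := hfp.symm.trans hfp'
      subst this
      rfl
    refine ⟨k, hk, hkD, S, ?_, ?_, ?_, hcop⟩
    · intro j
      obtain ⟨p, h1, h2, -⟩ := hΛ w0 hw0
      exact ⟨_, (hS j _).2 ⟨p j, h1 j, h2 j, rfl⟩⟩
    · intro j
      refine ⟨γ j, (hγ j).1, (hγ j).2, fun q hq => ?_⟩
      obtain ⟨p, hp, -, h⟩ := (hS j q).1 hq
      exact ⟨p, hp, h⟩
    · intro w hw
      obtain ⟨p, h1, h2, h3⟩ := hΛ w hw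
      have hmem : ∀ j, p j ^ γ j ∈ S j := fun j => (hS j _).2 ⟨p j, h1 j, h2 j, rfl⟩
      refine ⟨fun j => p j ^ γ j, ⟨hmem, h3⟩, ?_⟩
      rintro c ⟨hc1, hc2⟩
      funext j
      by_contra hne
      have hco : Nat.Coprime (c j) (∏ j', p j' ^ γ j') := by
        apply Nat.Coprime.prod_right
        intro j' _
        apply hcop j j' _ _ (hc1 j) (hmem j')
        intro h
        rw [Prod.mk.injEq] at h
        obtain ⟨rfl, h⟩ := h
        exact hne h
      have hd : c j ∣ ∏ j', p j' ^ γ j' := by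
        rw [← h3, hc2]
        exact Finset.dvd_prod_of_mem c (Finset.mem_univ j)
      have h1' : c j = 1 := Nat.Coprime.eq_one_of_dvd hco hd
      obtain ⟨p', hp', -, h⟩ := (hS j _).1 (hc1 j)
      have := Nat.one_lt_pow (n := γ j) (by have := (hγ j).1; omega) (hV p' hp').1.one_lt
      omega

lemma pi_props (D m : ℕ) (V : Set ℕ) (hV : ∀ p ∈ V, p.Prime ∧ m < p) (w : ℕ)
    (hw : w ∈ PiProdIW D V) : 1 < w ∧ ∀ e Q, Q ∣ (m.factorial) ^ e → Nat.Coprime w Q := by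
  obtain ⟨k, hk, hkD, p, γ, hp, hinj, hγ, rfl⟩ := hw
  have h1 : ∀ j, 1 < p j ^ γ j := fun j =>
    Nat.one_lt_pow (by have := (hγ j).1; omega) (hV _ (hp j)).1.one_lt
  constructor
  · have hd : p ⟨0, hk⟩ ^ γ ⟨0, hk⟩ ∣ ∏ l, p l ^ γ l :=
      Finset.dvd_prod_of_mem (fun l => p l ^ γ l) (Finset.mem_univ _)
    exact (h1 _).trans_le (Nat.le_of_dvd (Finset.prod_pos fun j _ => (zero_lt_one.trans (h1 j))) hd)
  · intro e Q hQ
    apply Nat.Coprime.coprime_dvd_right hQ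
    apply Nat.Coprime.pow_right
    apply Nat.Coprime.prod_left
    intro j _
    apply Nat.Coprime.pow_left
    rw [(hV _ (hp j)).1.coprime_iff_not_dvd, (hV _ (hp j)).1.dvd_factorial]
    have := (hV _ (hp j)).2
    omega

/-- The main decomposition of the index set. -/
lemma decomp (D N M : ℕ) (V : Set ℕ) (hV : ∀ p ∈ V, p.Prime ∧ p ≤ N) (hD : 1 ≤ D)
    (hne : V.Nonempty)
    (hM : (1 - 1 / ((D ^ D : ℕ) : ℝ)) ^ M * ((N + 1 : ℕ) : ℝ) ^ D < 1) :
    ∃ Λ : Option (Fin D × (Fin D → Fin D) × Fin M) → Set ℕ,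
      (∀ i, HasOProp D V (Λ i)) ∧ (∀ w, (w ∈ PiProdIW D V ∨ w = 1) ↔ ∃ i, w ∈ Λ i) ∧
      (∀ i i' w, w ∈ Λ i → w ∈ Λ i' → i = i') := by
  classical
  have hK1 : (1 : ℝ) ≤ ((D ^ D : ℕ) : ℝ) := by exact_mod_cast Nat.one_le_pow _ _ hD
  have h0 : 0 ≤ 1 - 1 / ((D ^ D : ℕ) : ℝ) := by
    have : 1 / ((D ^ D : ℕ) : ℝ) ≤ 1 := by rw [div_le_one (by linarith)]; exact hK1
    linarith
  have hh : ∀ κ : Fin D, ∃ f : Fin M → Fin (N+1) → Fin (κ.val+1),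
      ∀ p : Fin (κ.val+1) → Fin (N+1), Function.Injective p → ∃ i, ∀ j, f i (p j) = j := by
    intro κ
    apply hash_exists (N+1) (κ.val+1) (by omega) (D ^ D)
    · exact (Nat.pow_le_pow_left κ.2 _).trans (Nat.pow_le_pow_right hD κ.2)
    · refine lt_of_le_of_lt (mul_le_mul_of_nonneg_left ?_ (pow_nonneg h0 M)) hM
      exact pow_le_pow_right₀ (by exact_mod_cast Nat.le_add_left 1 N) κ.2
  choose f hf using hh
  let F : (κ : Fin D) → Fin M → ℕ → Fin (κ.val + 1) := fun κ i x => f κ i (Fin.ofNat (N+1) x)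
  let G : (κ : Fin D) → (Fin D → Fin D) → Fin (κ.val + 1) → ℕ :=
    fun κ g j => (g (Fin.castLE κ.2 j)).val + 1
  have hex : ∀ w : PiProdIW D V, ∃ x : Fin D × (Fin D → Fin D) × Fin M,
      ∃ p : Fin (x.1.val+1) → ℕ, (∀ j, p j ∈ V) ∧ (∀ j, F x.1 x.2.2 (p j) = j) ∧
        w.1 = ∏ j, p j ^ G x.1 x.2.1 j := by
    rintro ⟨w, k, hk, hkD, p, γ, hp, hinj, hγ, rfl⟩
    obtain ⟨k, rfl⟩ : ∃ k', k = k' + 1 := ⟨k - 1, by omega⟩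
    obtain ⟨i, hi⟩ := hf ⟨k, hkD⟩ (fun j => Fin.ofNat (N+1) (p j)) (by
      intro a b hab
      have := congrArg Fin.val hab
      simp only [Fin.val_ofNat] at this
      rw [Nat.mod_eq_of_lt (by have := (hV _ (hp a)).2; omega),
        Nat.mod_eq_of_lt (by have := (hV _ (hp b)).2; omega)] at this
      exact hinj this)
    refine ⟨(⟨k, hkD⟩, fun x => if h : x.val < k + 1 then
      ⟨γ ⟨x.val, h⟩ - 1, by have := hγ ⟨x.val, h⟩; omega⟩ else ⟨0, hD⟩, i), p, hp, hi, ?_⟩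
    change ∏ l : Fin (k+1), p l ^ γ l = ∏ l : Fin (k+1), _
    apply Finset.prod_congr rfl
    intro j _
    congr 1
    simp only [G, Fin.val_castLE, j.2, dif_pos]
    have := (hγ j).1
    simp only [Fin.eta]
    omega
  choose x hx using hex
  have h1 : ∀ w ∈ PiProdIW D V, 1 < w := fun w hw =>
    (pi_props D 0 V (fun p hp => ⟨(hV p hp).1, (hV p hp).1.pos⟩) w hw).1
  refine ⟨fun o => o.elim {1} (fun y => {w | ∃ h : w ∈ PiProdIW D V, x ⟨w, h⟩ = y}), ?_, ?_, ?_⟩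
  · rintro (_ | y)
    · left; rfl
    · refine hasO_of_color D V N hV hne hD (y.1.val+1) (by omega) y.1.2 (G y.1 y.2.1) ?_
        (F y.1 y.2.2) _ ?_
      · intro j
        exact ⟨Nat.le_add_left _ _, (y.2.1 _).2⟩
      · rintro w ⟨h, rfl⟩
        exact hx ⟨w, h⟩
  · intro w
    constructor
    · rintro (h | h)
      · exact ⟨some (x ⟨w, h⟩), h, rfl⟩
      · exact ⟨none, h⟩
    · rintro ⟨_ | y, h⟩
      · exact Or.inr h
      · exact Or.inl h.1
  · rintro (_ | y) (_ | y') w hw hw'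
    · rfl
    · obtain ⟨h, -⟩ := hw'
      have : w = 1 := hw
      have := h1 w h
      omega
    · obtain ⟨h, -⟩ := hw
      have : w = 1 := hw'
      have := h1 w h
      omega
    · obtain ⟨h, rfl⟩ := hw
      obtain ⟨h', rfl⟩ := hw'
      rfl

lemma assemble (ρ : ℝ) (d N : ℕ) (ι : Type) [Fintype ι] (Λ' : ι → Set ℕ)
    (hO : ∀ i, HasOProp (DIW ρ) (primesIW ρ N) (Λ' i))
    (hU : ∀ w, (w ∈ PiProdIW (DIW ρ) (primesIW ρ N) ∨ w = 1) ↔ ∃ i, w ∈ Λ' i)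
    (hdis : ∀ i i' w, w ∈ Λ' i → w ∈ Λ' i' → i = i') :
    ∃ (Λ : Fin (Fintype.card ι) → Set ℕ),
          (∀ i, Λ i ⊆ PiProdIW (DIW ρ) (primesIW ρ N) ∪ {1}) ∧
          (∀ i, HasOProp (DIW ρ) (primesIW ρ N) (Λ i)) ∧
          UNIW ρ d N = ⋃ i, RfracIW d
            {q | ∃ Q w : ℕ, Q ∣ QzeroIW ρ N ∧ w ∈ Λ i ∧ q = Q * w} ∧
          Pairwise fun i i' =>
            Disjoint
              (RfracIW d {q | ∃ Q w : ℕ, Q ∣ QzeroIW ρ N ∧ w ∈ Λ i ∧ q = Q * w})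
              (RfracIW d {q | ∃ Q w : ℕ, Q ∣ QzeroIW ρ N ∧ w ∈ Λ i' ∧ q = Q * w}) := by
  let e := Fintype.equivFin ι
  have hV : ∀ p ∈ primesIW ρ N, p.Prime ∧ NzeroIW ρ N < p := fun p hp => ⟨hp.1, hp.2.1⟩
  have hprop : ∀ i w, w ∈ Λ' i → 0 < w ∧ ∀ Q, Q ∣ QzeroIW ρ N → Nat.Coprime w Q := by
    intro i w hw
    rcases (hU w).2 ⟨i, hw⟩ with h | rfl
    · have := pi_props _ _ _ hV w h
      exact ⟨by omega, fun Q hQ => this.2 _ Q hQ⟩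
    · exact ⟨one_pos, fun Q _ => Nat.coprime_one_left Q⟩
  have hQ0 : QzeroIW ρ N ≠ 0 := pow_ne_zero _ (Nat.factorial_ne_zero _)
  refine ⟨fun i => Λ' (e.symm i), fun i w hw => (hU w).2 ⟨_, hw⟩, fun i => hO _, ?_, ?_⟩
  · ext v
    simp only [UNIW, RfracIW, Set.mem_iUnion, Set.mem_setOf_eq]
    constructor
    · rintro ⟨q, ⟨Q, w, hQ, hw, hq⟩, h⟩
      obtain ⟨i, hi⟩ := (hU w).1 hw
      exact ⟨e i, q, ⟨Q, w, hQ, by simpa using hi, hq⟩, h⟩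
    · rintro ⟨i, q, ⟨Q, w, hQ, hw, hq⟩, h⟩
      exact ⟨q, ⟨Q, w, hQ, (hU w).2 ⟨_, hw⟩, hq⟩, h⟩
  · intro i i' hne
    rw [Set.disjoint_left]
    rintro v ⟨q, ⟨Q, w, hQ, hw, rfl⟩, a, ha, rfl⟩ ⟨r, ⟨Q', w', hQ', hw', rfl⟩, b, hb, h⟩
    have p1 := hprop _ _ hw
    have p2 := hprop _ _ hw'
    have q1 : Q * w ≠ 0 := mul_ne_zero (ne_zero_of_dvd_ne_zero hQ0 hQ) p1.1.ne'
    have q2 : Q' * w' ≠ 0 := mul_ne_zero (ne_zero_of_dvd_ne_zero hQ0 hQ') p2.1.ne'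
    have h' := fun i => congrFun h i
    have heq : Q * w = Q' * w' :=
      Nat.dvd_antisymm (aq_dvd q1 q2 ha h') (aq_dvd q2 q1 hb fun i => (h' i).symm)
    have d1 : w ∣ w' := (p1.2 _ hQ').dvd_of_dvd_mul_left (heq ▸ Dvd.intro_left Q rfl)
    have d2 : w' ∣ w := (p2.2 _ hQ).dvd_of_dvd_mul_left (heq ▸ Dvd.intro_left Q' rfl)
    obtain rfl := Nat.dvd_antisymm d1 d2
    exact hne (e.symm.injective (hdis _ _ _ hw hw'))

/-- **Fundamental combinatorial lemma (Lemma 12).**  For every `ρ > 0` there is `C_ρ > 0`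
such that for every `N` the set `𝒰_N` is a disjoint union of at most `C_ρ log(N+2)` sets
`𝒰_N^i = R(P_N^i)` with `P_N^i = {Q·w : Q ∣ Q₀, w ∈ Λ_i}`, where each
`Λ_i ⊆ Π(ℙ_N) ∪ {1}` has the `O` property. -/
theorem statement13 (ρ : ℝ) (hρ : 0 < ρ) (d : ℕ) :
    ∃ C : ℝ, 0 < C ∧
      ∀ N : ℕ, 1 ≤ N →
        ∃ (I : ℕ) (Λ : Fin I → Set ℕ),
          (I : ℝ) ≤ C * Real.log ((N : ℝ) + 2) ∧
          (∀ i, Λ i ⊆ PiProdIW (DIW ρ) (primesIW ρ N) ∪ {1}) ∧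
          (∀ i, HasOProp (DIW ρ) (primesIW ρ N) (Λ i)) ∧
          UNIW ρ d N = ⋃ i, RfracIW d
            {q | ∃ Q w : ℕ, Q ∣ QzeroIW ρ N ∧ w ∈ Λ i ∧ q = Q * w} ∧
          Pairwise fun i i' =>
            Disjoint
              (RfracIW d {q | ∃ Q w : ℕ, Q ∣ QzeroIW ρ N ∧ w ∈ Λ i ∧ q = Q * w})
              (RfracIW d {q | ∃ Q w : ℕ, Q ∣ QzeroIW ρ N ∧ w ∈ Λ i' ∧ q = Q * w}) := by
  set D := DIW ρ with hDdef
  have hD : 1 ≤ D := Nat.le_add_left 1 _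
  have hDD : 1 ≤ D ^ D := Nat.one_le_pow _ _ hD
  have hDr : (1 : ℝ) ≤ ((D ^ D : ℕ) : ℝ) := by exact_mod_cast hDD
  refine ⟨1 + D * ((D ^ D : ℕ) : ℝ) * (((D ^ D : ℕ) : ℝ) * D + 1), by positivity, fun N hN => ?_⟩
  have hL : 1 ≤ Real.log ((N : ℝ) + 2) := by
    rw [Real.le_log_iff_exp_le (by positivity)]
    have := Real.exp_one_lt_d9
    have : (1 : ℝ) ≤ N := by exact_mod_cast hN
    linarith
  set L := Real.log ((N : ℝ) + 2) with hLdef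
  rcases (primesIW ρ N).eq_empty_or_nonempty with hemp | hne
  · obtain ⟨Λ, h⟩ := assemble ρ d N Unit (fun _ => {1}) (fun _ => Or.inl rfl) (by
      intro w
      constructor
      · rintro (⟨k, hk, -, p, γ, hp, -⟩ | h)
        · have := hp ⟨0, hk⟩
          rw [hemp] at this
          exact this.elim
        · exact ⟨(), h⟩
      · rintro ⟨_, h⟩
        exact Or.inr h) (fun _ _ _ _ _ => rfl)
    refine ⟨_, Λ, ?_, h⟩
    simp only [Fintype.card_unit, Nat.cast_one]
    have : 0 ≤ D * ((D ^ D : ℕ) : ℝ) * (((D ^ D : ℕ) : ℝ) * D + 1) := by positivity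
    nlinarith
  · set M := ⌊((D ^ D : ℕ) : ℝ) * D * L⌋₊ + 1 with hMdef
    have hM1 : ((D ^ D : ℕ) : ℝ) * D * L < M := by
      rw [hMdef]; push_cast; exact_mod_cast Nat.lt_floor_add_one (((D ^ D : ℕ) : ℝ) * D * L)
    have hM2 : (M : ℝ) ≤ ((D ^ D : ℕ) : ℝ) * D * L + 1 := by
      rw [hMdef]
      have := Nat.floor_le (a := ((D ^ D : ℕ) : ℝ) * D * L) (by positivity)
      rw [Nat.cast_add, Nat.cast_one]
      linarith
    have hM : (1 - 1 / ((D ^ D : ℕ) : ℝ)) ^ M * ((N + 1 : ℕ) : ℝ) ^ D < 1 := by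
      have h0 : 0 ≤ 1 - 1 / ((D ^ D : ℕ) : ℝ) := by
        have : 1 / ((D ^ D : ℕ) : ℝ) ≤ 1 := by rw [div_le_one (by linarith)]; exact hDr
        linarith
      have a1 : (1 - 1 / ((D ^ D : ℕ) : ℝ)) ^ M ≤ Real.exp (M * -(1 / ((D ^ D : ℕ) : ℝ))) := by
        rw [Real.exp_nat_mul]
        exact pow_le_pow_left₀ h0 (Real.one_sub_le_exp_neg _) M
      have a2 : ((N + 1 : ℕ) : ℝ) ^ D ≤ Real.exp (D * L) := by
        rw [Real.exp_nat_mul, hLdef, Real.exp_log (by positivity)]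
        refine pow_le_pow_left₀ (by positivity) ?_ D
        push_cast; linarith
      calc _ ≤ Real.exp (M * -(1 / ((D ^ D : ℕ) : ℝ))) * Real.exp (D * L) :=
            mul_le_mul a1 a2 (by positivity) (Real.exp_nonneg _)
        _ = Real.exp (D * L - M / ((D ^ D : ℕ) : ℝ)) := by rw [← Real.exp_add]; ring_nf
        _ < 1 := by
          rw [Real.exp_lt_one_iff, sub_neg, lt_div_iff₀ (by linarith)]
          linarith
    obtain ⟨Λ', h1, h2, h3⟩ := decomp D N M (primesIW ρ N) (fun p hp => ⟨hp.1, hp.2.2⟩) hD hne hM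
    obtain ⟨Λ, h⟩ := assemble ρ d N _ Λ' h1 h2 h3
    refine ⟨_, Λ, ?_, h⟩
    simp only [Fintype.card_option, Fintype.card_prod, Fintype.card_fun, Fintype.card_fin]
    have e : ((D * (D ^ D * M) + 1 : ℕ) : ℝ) = D * ((D ^ D : ℕ) : ℝ) * M + 1 := by push_cast; ring
    rw [e]
    have hM3 : (M : ℝ) ≤ (((D ^ D : ℕ) : ℝ) * D + 1) * L := by linarith
    have : D * ((D ^ D : ℕ) : ℝ) * M ≤ D * ((D ^ D : ℕ) : ℝ) * ((((D ^ D : ℕ) : ℝ) * D + 1) * L) :=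
      mul_le_mul_of_nonneg_left hM3 (by positivity)
    linarith

end
end

section
/- Let r ∈ ℕ, let X be a finite set, let Z ⊆ X with |Z| ≤ r, and let (g_{i,j} : i ∈ X, 1 ≤ j ≤ r) be complex numbers. Then for every sequence I = (i₀(1), i₁(1), …, i₀(r), i₁(r)) ∈ X^{2r} which does NOT have the uniqueness property and whose set of entries equals Z (i.e. {i₀(1), i₁(1), …, i₀(r), i₁(r)} = Z), one has ∏_{j=1}^{r} |g_{i₀(j),j}| · |g_{i₁(j),j}| ≤ 2 · Σ ∏_{j=1}^{r} |g_{i(j),j}|², where the sum is over all sequences (i(1),…,i(r)) ∈ X^r with {i(1),…,i(r)} = Z. -/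
def tw {α : Type*} [DecidableEq α] (σ : α → α) (A B : α) (s : α) : α :=
  if s = A then B else if s = B then A else
    if s = σ A then σ B else if s = σ B then σ A else σ s

theorem tw_inv {α : Type*} [DecidableEq α] (σ : α → α) (A B : α)
    (h1 : ∀ s, σ (σ s) = s) (h2 : ∀ s, σ s ≠ s) (hab : A ≠ B) (hs : σ A ≠ B) (s : α) :
    tw σ A B (tw σ A B s) = s := by
  have inj : ∀ s t, σ s = σ t → s = t := fun s t h => by rw [← h1 s, h, h1]
  have hA := h2 A
  have hB := h2 B
  have hs' : σ B ≠ A := fun h => hs (by rw [← h, h1])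
  have hss : σ A ≠ σ B := fun h => hab (inj _ _ h)
  by_cases c1 : s = A
  · subst c1; simp [tw, hab.symm]
  by_cases c2 : s = B
  · subst c2; simp [tw, c1]
  by_cases c3 : s = σ A
  · subst c3; simp [tw, hs, hA, hB, hs', hss.symm]
  by_cases c4 : s = σ B
  · subst c4; simp [tw, hs, hA, hB, hs', hss.symm]
  have d1 : σ s ≠ A := fun h => c3 (by rw [← h, h1])
  have d2 : σ s ≠ B := fun h => c4 (by rw [← h, h1])
  have d3 : σ s ≠ σ A := fun h => c1 (inj _ _ h)
  have d4 : σ s ≠ σ B := fun h => c2 (inj _ _ h)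
  simp [tw, c1, c2, c3, c4, d1, d2, d3, d4, h1]

theorem tw_ne {α : Type*} [DecidableEq α] (σ : α → α) (A B : α)
    (h1 : ∀ s, σ (σ s) = s) (h2 : ∀ s, σ s ≠ s) (hab : A ≠ B) (hs : σ A ≠ B) (s : α) :
    tw σ A B s ≠ s := by
  have inj : ∀ s t, σ s = σ t → s = t := fun s t h => by rw [← h1 s, h, h1]
  have hss : σ A ≠ σ B := fun h => hab (inj _ _ h)
  unfold tw
  split_ifs with c1 c2 c3 c4
  · rw [c1]; exact hab.symm
  · rw [c2]; exact hab
  · rw [c3]; exact hss.symm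
  · rw [c4]; exact hss
  · exact h2 s

theorem tw_col {α : Type*} [DecidableEq α] (σ : α → α) (A B : α)
    (h1 : ∀ s, σ (σ s) = s) (h2 : ∀ s, σ s ≠ s) (hab : A ≠ B) (hs : σ A ≠ B)
    (c : α → Bool) (hc : ∀ s, c (tw σ A B s) = !c s) :
    ∃ c' : α → Bool, (∀ s, c' (σ s) = !c' s) ∧ c' A ≠ c' B ∧
      ∀ s, s ≠ A → s ≠ B → c' s = c s := by
  have inj : ∀ s t, σ s = σ t → s = t := fun s t h => by rw [← h1 s, h, h1]
  have hA := h2 A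
  have hB := h2 B
  have hs' : σ B ≠ A := fun h => hs (by rw [← h, h1])
  have e1 : c B = !c A := by simpa [tw] using hc A
  have e2 : c (σ B) = !c (σ A) := by simpa [tw, hA, hs] using hc (σ A)
  have e3 : ∀ s, s ≠ A → s ≠ B → s ≠ σ A → s ≠ σ B → c (σ s) = !c s := by
    intro s c1 c2 c3 c4
    simpa [tw, c1, c2, c3, c4] using hc s
  refine ⟨fun s => if s = A then !c (σ A) else if s = B then !c (σ B) else c s, ?_, ?_, ?_⟩
  · intro s
    by_cases c1 : s = A
    · subst c1; simp [hA, hs]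
    by_cases c2 : s = B
    · subst c2; simp [hB, hs', c1]
    by_cases c3 : s = σ A
    · subst c3; simp [h1, hA, hs]
    by_cases c4 : s = σ B
    · subst c4; simp [h1, hB, hs', hab.symm]
    have d1 : σ s ≠ A := fun h => c3 (by rw [← h, h1])
    have d2 : σ s ≠ B := fun h => c4 (by rw [← h, h1])
    simp [c1, c2, d1, d2, e3 s c1 c2 c3 c4]
  · simp [hab.symm, e2]
  · intro s c1 c2
    simp [c1, c2]

theorem two_col {α X : Type*} [DecidableEq α] [DecidableEq X] (v : α → X) (a b : X → α)
    (T : Finset X) : (∀ x ∈ T, a x ≠ b x ∧ v (a x) = x ∧ v (b x) = x) →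
    ∀ σ : α → α, (∀ s, σ (σ s) = s) → (∀ s, σ s ≠ s) →
    ∃ c : α → Bool, (∀ s, c (σ s) = !c s) ∧ ∀ x ∈ T, c (a x) ≠ c (b x) := by
  induction T using Finset.induction_on with
  | empty =>
    intro _ σ h1 h2
    -- choose one point in each orbit, using a linear order
    classical
    let : LinearOrder α := linearOrderOfSTO (WellOrderingRel (α := α))
    refine ⟨fun s => decide (s < σ s), fun s => ?_, by simp⟩
    beta_reduce
    rw [h1]
    rcases lt_or_gt_of_ne (h2 s) with h | h
    · simp [h, h.le]
    · simp [h, h.le]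
  | insert x T hx ih =>
    intro hT σ h1 h2
    have hT' : ∀ y ∈ T, a y ≠ b y ∧ v (a y) = y ∧ v (b y) = y :=
      fun y hy => hT y (Finset.mem_insert_of_mem hy)
    obtain ⟨hab, hva, hvb⟩ := hT x (Finset.mem_insert_self _ _)
    by_cases hs : σ (a x) = b x
    · obtain ⟨c, hc1, hc2⟩ := ih hT' σ h1 h2
      refine ⟨c, hc1, ?_⟩
      intro y hy
      rcases Finset.mem_insert.1 hy with rfl | hy
      · rw [← hs, hc1]; simp
      · exact hc2 y hy
    · have hd : ∀ y ∈ T, a y ≠ a x ∧ a y ≠ b x ∧ b y ≠ a x ∧ b y ≠ b x := by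
        intro y hy
        obtain ⟨_, p, q⟩ := hT' y hy
        have : y ≠ x := fun h => hx (h ▸ hy)
        refine ⟨?_, ?_, ?_, ?_⟩ <;> intro h <;> apply this
        · rw [← p, h, hva]
        · rw [← p, h, hvb]
        · rw [← q, h, hva]
        · rw [← q, h, hvb]
      obtain ⟨c, hc1, hc2⟩ := ih hT' (tw σ (a x) (b x)) (tw_inv σ _ _ h1 h2 hab hs)
        (tw_ne σ _ _ h1 h2 hab hs)
      obtain ⟨c', k1, k2, k3⟩ := tw_col σ _ _ h1 h2 hab hs c hc1
      refine ⟨c', k1, ?_⟩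
      intro y hy
      rcases Finset.mem_insert.1 hy with rfl | hy
      · exact k2
      · obtain ⟨u1, u2, u3, u4⟩ := hd y hy
        rw [k3 _ u1 u2, k3 _ u3 u4]
        exact hc2 y hy

/-- **Combinatorial lemma (Lemma 17).** Let `Z ⊆ X` with `|Z| ≤ r` and let
`(g_{i,j})_{i∈X, j∈{1,…,r}}` be complex numbers.  If the sequence
`(i₀(1), i₁(1), …, i₀(r), i₁(r))` does not have the uniqueness property (every entry
occurs at least twice) and its set of entries equals `Z`, then
`∏_j |g_{i₀(j),j}|·|g_{i₁(j),j}| ≤ 2 Σ_{{i(1),…,i(r)}=Z} ∏_j |g_{i(j),j}|²`. -/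
theorem statement14 (r : ℕ) (X : Type*) [Fintype X] [DecidableEq X]
    (Z : Finset X) (hZ : Z.card ≤ r) (g : X → Fin r → ℂ)
    (i₀ i₁ : Fin r → X)
    (hset : Finset.image i₀ Finset.univ ∪ Finset.image i₁ Finset.univ = Z)
    (hnouniq : ∀ x ∈ Finset.image i₀ Finset.univ ∪ Finset.image i₁ Finset.univ,
      2 ≤ (Finset.univ.filter fun j => i₀ j = x).card +
          (Finset.univ.filter fun j => i₁ j = x).card) :
    ∏ j : Fin r, (‖g (i₀ j) j‖ * ‖g (i₁ j) j‖) ≤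
      2 * ∑ c ∈ Finset.univ.filter (fun c : Fin r → X => Finset.image c Finset.univ = Z),
        ∏ j : Fin r, ‖g (c j) j‖ ^ 2 := by
  classical
  rcases Nat.eq_zero_or_pos r with rfl | hr
  · have hz : Z = ∅ := by rw [← hset]; simp
    subst hz
    simp
  have key : ∀ x : X, ∃ p : (Fin r ⊕ Fin r) × (Fin r ⊕ Fin r), x ∈ Z →
      p.1 ≠ p.2 ∧ Sum.elim i₀ i₁ p.1 = x ∧ Sum.elim i₀ i₁ p.2 = x := by
    intro x
    by_cases hx : x ∈ Z
    · have h := hnouniq x (hset ▸ hx)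
      have h2 : 1 < (Finset.univ.filter fun s => Sum.elim i₀ i₁ s = x).card := by
        simp only [Finset.card_filter] at h ⊢
        rw [Fintype.sum_sum_type]
        exact h
      obtain ⟨p, hp, q, hq, hpq⟩ := Finset.one_lt_card.1 h2
      exact ⟨(p, q), fun _ => ⟨hpq, by simpa using hp, by simpa using hq⟩⟩
    · exact ⟨(Sum.inl ⟨0, hr⟩, Sum.inl ⟨0, hr⟩), fun h => absurd h hx⟩
  choose p hp using key
  obtain ⟨c, hc1, hc2⟩ := two_col (Sum.elim i₀ i₁) (fun x => (p x).1) (fun x => (p x).2) Z hp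
    Sum.swap (by simp) (by rintro (s | s) <;> simp)
  have hc : ∀ j, c (Sum.inr j) = !c (Sum.inl j) := fun j => hc1 (Sum.inl j)
  have hmem : ∀ t : Bool, Finset.image (fun j => if c (Sum.inl j) = t then i₀ j else i₁ j)
      Finset.univ = Z := by
    intro t
    ext x
    constructor
    · intro h
      rw [← hset]
      simp only [Finset.mem_image, Finset.mem_univ, true_and, Finset.mem_union] at h ⊢
      obtain ⟨j, hj⟩ := h
      split_ifs at hj
      · exact Or.inl ⟨j, hj⟩
      · exact Or.inr ⟨j, hj⟩
    · intro h
      obtain ⟨_, h1, h2⟩ := hp x h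
      have h3 := hc2 x h
      have : ∃ s, Sum.elim i₀ i₁ s = x ∧ c s = t := by
        by_cases h4 : c (p x).1 = t
        · exact ⟨_, h1, h4⟩
        · exact ⟨_, h2, by revert h3 h4; cases c (p x).1 <;> cases c (p x).2 <;> cases t <;> simp⟩
      simp only [Finset.mem_image, Finset.mem_univ, true_and]
      obtain ⟨s | s, hs, ht⟩ := this
      · exact ⟨s, by simpa [ht] using hs⟩
      · refine ⟨s, ?_⟩
        rw [hc] at ht
        rw [if_neg (by rw [← ht]; simp)]
        simpa using hs
  set F : (Fin r → X) → ℝ := fun d => ∏ j, ‖g (d j) j‖ with hF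
  have hle : ∀ d : Fin r → X, Finset.image d Finset.univ = Z → F d ^ 2 ≤
      ∑ c ∈ Finset.univ.filter (fun c : Fin r → X => Finset.image c Finset.univ = Z),
        ∏ j : Fin r, ‖g (c j) j‖ ^ 2 := by
    intro d hd
    rw [hF, ← Finset.prod_pow]
    exact Finset.single_le_sum (f := fun d : Fin r → X => ∏ j : Fin r, ‖g (d j) j‖ ^ 2)
      (fun _ _ => by positivity) (by simpa using hd)
  have heq : ∏ j : Fin r, (‖g (i₀ j) j‖ * ‖g (i₁ j) j‖) =
      F (fun j => if c (Sum.inl j) = true then i₀ j else i₁ j) *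
      F (fun j => if c (Sum.inl j) = false then i₀ j else i₁ j) := by
    rw [hF, ← Finset.prod_mul_distrib]
    refine Finset.prod_congr rfl fun j _ => ?_
    rcases hb : c (Sum.inl j) with _ | _
    · simp [hb, mul_comm]
    · simp [hb]
  rw [heq]
  have h1 := hle _ (hmem true)
  have h2 := hle _ (hmem false)
  set A := F (fun j => if c (Sum.inl j) = true then i₀ j else i₁ j)
  set B := F (fun j => if c (Sum.inl j) = false then i₀ j else i₁ j)
  nlinarith [sq_nonneg (A - B), sq_nonneg A, sq_nonneg B]
end

section
/- Gaussian-sum approximation for the averaging multiplier: there is a constant C > 0 (depending only on k and N₀, hence on d) such that for every N ∈ ℕ, all reals L₁ ≥ N and L₂ ≥ 1, every integer q with 1 ≤ q ≤ L₃ where L₃ ≤ N^{1/2}, every a ∈ A_q, and every ξ ∈ [−1/2, 1/2)^d satisfying |ξ_γ − a_γ/q| ≤ L₁^{−|γ|} L₂ for all γ ∈ Γ, one has | m_N(ξ) − G(a/q) Φ_N(ξ − a/q) | ≤ C ( L₃ N^{−1} + L₂ L₃ N^{−1} Σ_{γ∈Γ} (N/L₁)^{|γ|} ); in particular this is at most C'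 L₂ L₃ N^{−1} for a constant C' depending only on k and N₀. -/
noncomputable section

/-- The set `Γ` of multi-indices `γ ≠ 0` with `0 ≤ γ_j ≤ N₀`. -/
abbrev Gam (k N₀ : ℕ) := {γ : Fin k → Fin (N₀ + 1) // γ ≠ 0}

/-- The multiplier `m_N(ξ) = N^{−k} Σ_{y ∈ {1,…,N}^k} e^{2πi ξ·Q(y)}` of the averaging
operator along the canonical polynomial mapping `Q`. -/
def mAvg (k N₀ N : ℕ) (ξ : Gam k N₀ → ℝ) : ℂ :=
  ((N : ℂ) ^ k)⁻¹ *
    ∑ y ∈ Fintype.piFinset fun _ : Fin k => Finset.Icc 1 N,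
      Complex.exp (2 * Real.pi * Complex.I *
        ((∑ γ : Gam k N₀, ξ γ * ∏ i, (y i : ℝ) ^ ((γ : Fin k → Fin (N₀ + 1)) i : ℕ) : ℝ) : ℂ))

/-- The continuous analogue `Φ_N(θ) = ∫_{[0,1]^k} e^{2πi θ·Q(Ny)} dy`. -/
def PhiAvg (k N₀ N : ℕ) (θ : Gam k N₀ → ℝ) : ℂ :=
  ∫ y in {y : Fin k → ℝ | ∀ i, y i ∈ Set.Icc (0 : ℝ) 1},
    Complex.exp (2 * Real.pi * Complex.I *
      ((∑ γ : Gam k N₀, θ γ * ∏ i, ((N : ℝ) * y i) ^ ((γ : Fin k → Fin (N₀ + 1)) i : ℕ) : ℝ) : ℂ))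

/-- The Gaussian sum `G(a/q) = q^{−k} Σ_{r ∈ {1,…,q}^k} e^{2πi (a/q)·Q(r)}`. -/
def gaussSumCan (k N₀ q : ℕ) (a : Gam k N₀ → ℕ) : ℂ :=
  ((q : ℂ) ^ k)⁻¹ *
    ∑ r ∈ Fintype.piFinset fun _ : Fin k => Finset.Icc 1 q,
      Complex.exp (2 * Real.pi * Complex.I *
        ((∑ γ : Gam k N₀, ((a γ : ℝ) / q) * ∏ i, (r i : ℝ) ^ ((γ : Fin k → Fin (N₀ + 1)) i : ℕ) : ℝ) : ℂ))

def evX (k N₀ : ℕ) (θ : Gam k N₀ → ℝ) (x : Fin k → ℝ) : ℂ :=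
  Complex.exp (2 * Real.pi * Complex.I *
    ((∑ γ : Gam k N₀, θ γ * ∏ i, (x i) ^ ((γ : Fin k → Fin (N₀ + 1)) i : ℕ) : ℝ) : ℂ))

def degX {k N₀ : ℕ} (γ : Gam k N₀) : ℕ := ∑ i, ((γ : Fin k → Fin (N₀ + 1)) i : ℕ)

lemma evX_norm (k N₀ : ℕ) (θ : Gam k N₀ → ℝ) (x : Fin k → ℝ) : ‖evX k N₀ θ x‖ = 1 := by
  unfold evX
  generalize (∑ γ : Gam k N₀, θ γ * ∏ i, (x i) ^ ((γ : Fin k → Fin (N₀ + 1)) i : ℕ) : ℝ) = t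
  have : 2 * (Real.pi : ℂ) * Complex.I * (t : ℂ) = ((2 * Real.pi * t : ℝ) : ℂ) * Complex.I := by
    push_cast; ring
  rw [this, Complex.norm_exp_ofReal_mul_I]

lemma evX_add (k N₀ : ℕ) (θ η : Gam k N₀ → ℝ) (x : Fin k → ℝ) :
    evX k N₀ (fun γ => θ γ + η γ) x = evX k N₀ θ x * evX k N₀ η x := by
  unfold evX
  rw [← Complex.exp_add]
  congr 1
  rw [← mul_add, ← Complex.ofReal_add, ← Finset.sum_add_distrib]
  simp only [add_mul]

lemma evX_cont (k N₀ : ℕ) (θ : Gam k N₀ → ℝ) : Continuous (evX k N₀ θ) := by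
  unfold evX
  fun_prop

lemma exp_lipX (s t : ℝ) : ‖Complex.exp (2 * Real.pi * Complex.I * (s : ℂ)) -
    Complex.exp (2 * Real.pi * Complex.I * (t : ℂ))‖ ≤ 2 * Real.pi * |s - t| := by
  have h1 : Complex.exp (2 * Real.pi * Complex.I * (s : ℂ)) -
    Complex.exp (2 * Real.pi * Complex.I * (t : ℂ)) =
    Complex.exp (((2 * Real.pi * t : ℝ) : ℂ) * Complex.I) *
      (Complex.exp (Complex.I * ((2 * Real.pi * (s - t) : ℝ) : ℂ)) - 1) := by
    rw [mul_sub, ← Complex.exp_add, mul_one]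
    congr 2 <;> (push_cast; ring)
  rw [h1, norm_mul, Complex.norm_exp_ofReal_mul_I, one_mul]
  refine (Real.norm_exp_I_mul_ofReal_sub_one_le).trans ?_
  rw [Real.norm_eq_abs, abs_mul, abs_of_pos (by positivity : 0 < 2 * Real.pi)]

lemma pow_lipX (u v : ℝ) (hu : 0 ≤ u ∧ u ≤ 1) (hv : 0 ≤ v ∧ v ≤ 1) (n : ℕ) :
    |u ^ n - v ^ n| ≤ n * |u - v| := by
  induction n with
  | zero => simp
  | succ n ih =>
    have e : u ^ (n+1) - v ^ (n+1) = (u ^ n - v ^ n) * u + v ^ n * (u - v) := by ring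
    rw [e]
    refine (abs_add_le _ _).trans ?_
    rw [abs_mul, abs_mul, abs_of_nonneg hu.1, abs_of_nonneg (pow_nonneg hv.1 n)]
    have h1 : |u ^ n - v ^ n| * u ≤ |u ^ n - v ^ n| := mul_le_of_le_one_right (abs_nonneg _) hu.2
    have h2 : v ^ n * |u - v| ≤ |u - v| :=
      mul_le_of_le_one_left (abs_nonneg _) (pow_le_one₀ hv.1 hv.2)
    push_cast
    linarith

lemma prod_lipX {ι : Type*} (s : Finset ι) (a b : ι → ℝ) (ha : ∀ i, 0 ≤ a i ∧ a i ≤ 1)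
    (hb : ∀ i, 0 ≤ b i ∧ b i ≤ 1) :
    |∏ i ∈ s, a i - ∏ i ∈ s, b i| ≤ ∑ i ∈ s, |a i - b i| := by
  classical
  induction s using Finset.induction_on with
  | empty => simp
  | insert j s hj ih =>
    rw [Finset.prod_insert hj, Finset.prod_insert hj, Finset.sum_insert hj]
    have e : a j * ∏ i ∈ s, a i - b j * ∏ i ∈ s, b i =
      (a j - b j) * ∏ i ∈ s, a i + b j * (∏ i ∈ s, a i - ∏ i ∈ s, b i) := by ring
    rw [e]
    refine (abs_add_le _ _).trans ?_
    have h0 : 0 ≤ ∏ i ∈ s, a i := Finset.prod_nonneg fun i _ => (ha i).1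
    have h0' : ∏ i ∈ s, a i ≤ 1 := Finset.prod_le_one (fun i _ => (ha i).1) fun i _ => (ha i).2
    rw [abs_mul, abs_mul, abs_of_nonneg h0, abs_of_nonneg (hb j).1]
    have h1 := mul_le_of_le_one_right (abs_nonneg (a j - b j)) h0'
    have h2 := mul_le_of_le_one_left (abs_nonneg (∏ i ∈ s, a i - ∏ i ∈ s, b i)) (hb j).2
    linarith

lemma mono_lipX {k N₀ : ℕ} (γ : Gam k N₀) (M h : ℝ) (hM : 0 < M) (x y : Fin k → ℝ)
    (hx : ∀ i, 0 ≤ x i ∧ x i ≤ M) (hy : ∀ i, 0 ≤ y i ∧ y i ≤ M) (hxy : ∀ i, |x i - y i| ≤ h) :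
    |∏ i, x i ^ (γ.1 i : ℕ) - ∏ i, y i ^ (γ.1 i : ℕ)| ≤ M ^ degX γ * (degX γ * (h / M)) := by
  have key : ∀ z : Fin k → ℝ, ∏ i, z i ^ (γ.1 i : ℕ) =
      M ^ degX γ * ∏ i, (z i / M) ^ (γ.1 i : ℕ) := by
    intro z
    unfold degX
    rw [← Finset.prod_pow_eq_pow_sum, ← Finset.prod_mul_distrib]
    refine Finset.prod_congr rfl fun i _ => ?_
    rw [← mul_pow]; congr 1; field_simp
  rw [key x, key y, ← mul_sub, abs_mul, abs_of_pos (by positivity)]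
  have b1 : ∀ z : Fin k → ℝ, (∀ i, 0 ≤ z i ∧ z i ≤ M) → ∀ i, 0 ≤ z i / M ∧ z i / M ≤ 1 :=
    fun z hz i => ⟨div_nonneg (hz i).1 hM.le, (div_le_one hM).2 (hz i).2⟩
  refine mul_le_mul_of_nonneg_left ?_ (by positivity)
  refine (prod_lipX _ _ _ (fun i => ⟨pow_nonneg (b1 x hx i).1 _, pow_le_one₀ (b1 x hx i).1 (b1 x hx i).2⟩)
    (fun i => ⟨pow_nonneg (b1 y hy i).1 _, pow_le_one₀ (b1 y hy i).1 (b1 y hy i).2⟩)).trans ?_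
  unfold degX
  push_cast
  rw [Finset.sum_mul]
  refine Finset.sum_le_sum fun i _ => ?_
  refine (pow_lipX _ _ (b1 x hx i) (b1 y hy i) _).trans ?_
  refine mul_le_mul_of_nonneg_left ?_ (by positivity)
  rw [← sub_div, abs_div, abs_of_pos hM]
  gcongr
  exact hxy i

lemma degX_le {k N₀ : ℕ} (γ : Gam k N₀) : degX γ ≤ k * N₀ := by
  unfold degX
  refine (Finset.sum_le_card_nsmul _ _ N₀ fun i _ => Nat.lt_succ_iff.1 (γ.1 i).2).trans ?_
  simp

lemma evX_lip (k N₀ N : ℕ) (hN : 1 ≤ N) (L₁ L₂ h : ℝ) (hL₁ : (N : ℝ) ≤ L₁) (hL₂ : 1 ≤ L₂) (hh : 0 ≤ h)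
    (θ : Gam k N₀ → ℝ) (hθ : ∀ γ, |θ γ| ≤ L₂ / L₁ ^ degX γ) (x y : Fin k → ℝ)
    (hx : ∀ i, 0 ≤ x i ∧ x i ≤ 2 * N) (hy : ∀ i, 0 ≤ y i ∧ y i ≤ 2 * N)
    (hxy : ∀ i, |x i - y i| ≤ h) :
    ‖evX k N₀ θ x - evX k N₀ θ y‖ ≤ (2 * Real.pi * (k * N₀) * 2 ^ (k * N₀)) *
      (L₂ * ∑ γ : Gam k N₀, ((N : ℝ) / L₁) ^ degX γ) * (h / N) := by
  have hN' : (0:ℝ) < N := by exact_mod_cast hN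
  have hL : 0 < L₁ := hN'.trans_le hL₁
  unfold evX
  refine (exp_lipX _ _).trans ?_
  rw [← Finset.sum_sub_distrib]
  have : |∑ γ : Gam k N₀, (θ γ * ∏ i, x i ^ (γ.1 i : ℕ) - θ γ * ∏ i, y i ^ (γ.1 i : ℕ))| ≤
      ∑ γ : Gam k N₀, ((k * N₀) * 2 ^ (k * N₀) * (L₂ * ((N : ℝ) / L₁) ^ degX γ) * (h / N)) := by
    refine (Finset.abs_sum_le_sum_abs _ _).trans (Finset.sum_le_sum fun γ _ => ?_)
    rw [← mul_sub, abs_mul]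
    refine (mul_le_mul (hθ γ) (mono_lipX γ (2 * N) h (by positivity) x y hx hy hxy) (abs_nonneg _)
      (by positivity)).trans ?_
    have hd : (degX γ : ℝ) ≤ k * N₀ := by exact_mod_cast degX_le γ
    have h2 : (2:ℝ) ^ degX γ ≤ 2 ^ (k * N₀) := pow_le_pow_right₀ (by norm_num) (degX_le γ)
    have h3 : h / (2 * N) ≤ h / N := by
      apply div_le_div_of_nonneg_left hh hN'; linarith
    have e : L₂ / L₁ ^ degX γ * ((2 * (N:ℝ)) ^ degX γ * (degX γ * (h / (2 * N)))) =
      degX γ * 2 ^ degX γ * (L₂ * ((N : ℝ) / L₁) ^ degX γ) * (h / (2 * N)) := by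
      rw [mul_pow, div_pow]; ring
    rw [e]
    gcongr
  refine (mul_le_mul_of_nonneg_left this (by positivity)).trans (le_of_eq ?_)
  rw [← Finset.sum_mul, ← Finset.mul_sum, ← Finset.mul_sum]
  ring

/-- periodicity -/
def hX (k N₀ q : ℕ) [NeZero q] (a : Gam k N₀ → ℕ) (x : Fin k → ZMod q) : ℂ :=
  ZMod.stdAddChar (∑ γ : Gam k N₀, (a γ : ZMod q) * ∏ i, x i ^ (γ.1 i : ℕ))

lemma evX_hX (k N₀ q : ℕ) [NeZero q] (a : Gam k N₀ → ℕ) (y : Fin k → ℕ) :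
    evX k N₀ (fun γ => (a γ : ℝ) / q) (fun i => (y i : ℝ)) = hX k N₀ q a (fun i => (y i : ZMod q)) := by
  unfold evX hX
  have : (∑ γ : Gam k N₀, (a γ : ZMod q) * ∏ i, (y i : ZMod q) ^ (γ.1 i : ℕ)) =
    (((∑ γ : Gam k N₀, (a γ : ℤ) * ∏ i, (y i : ℤ) ^ (γ.1 i : ℕ)) : ℤ) : ZMod q) := by
    push_cast; rfl
  rw [this, ZMod.stdAddChar_coe]
  congr 1
  push_cast
  rw [mul_div_assoc, Finset.sum_div]
  congr 1
  refine Finset.sum_congr rfl fun γ _ => ?_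
  ring

lemma sum_resX (k q : ℕ) [NeZero q] (f : (Fin k → ZMod q) → ℂ) :
    ∑ r ∈ Fintype.piFinset fun _ : Fin k => Finset.Icc 1 q, f (fun i => (r i : ZMod q)) =
      ∑ x, f x := by
  have hq : 0 < q := Nat.pos_of_ne_zero (NeZero.ne q)
  refine Finset.sum_bij (fun r _ i => (r i : ZMod q)) (fun _ _ => Finset.mem_univ _) ?_ ?_
    (fun _ _ => rfl)
  · intro r hr s hs h
    simp only [Fintype.mem_piFinset, Finset.mem_Icc] at hr hs
    funext i
    have h1 := congrFun h i
    beta_reduce at h1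
    rw [ZMod.natCast_eq_natCast_iff] at h1
    have := hr i
    have := hs i
    rcases le_total (r i) (s i) with hh | hh
    · have h2 := (Nat.modEq_iff_dvd' hh).1 h1
      by_contra hne
      have := Nat.le_of_dvd (by omega) h2
      omega
    · have h2 := (Nat.modEq_iff_dvd' hh).1 h1.symm
      by_contra hne
      have := Nat.le_of_dvd (by omega) h2
      omega
  · intro x _
    refine ⟨fun i => (x i - 1).val + 1, ?_, ?_⟩
    · simp only [Fintype.mem_piFinset, Finset.mem_Icc]
      intro i
      have := ZMod.val_lt (x i - 1)
      omega
    · funext i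
      simp

lemma sum_shiftX (k N₀ q : ℕ) (hq : 1 ≤ q) (a : Gam k N₀ → ℕ) (y : Fin k → ℕ) :
    ∑ s ∈ Fintype.piFinset fun _ : Fin k => Finset.Icc 1 q,
      evX k N₀ (fun γ => (a γ : ℝ) / q) (fun i => ((y i + s i : ℕ) : ℝ)) =
    ∑ s ∈ Fintype.piFinset fun _ : Fin k => Finset.Icc 1 q,
      evX k N₀ (fun γ => (a γ : ℝ) / q) (fun i => (s i : ℝ)) := by
  have : NeZero q := ⟨by omega⟩
  simp only [evX_hX]
  rw [sum_resX k q (hX k N₀ q a)]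
  have := sum_resX k q (fun x => hX k N₀ q a (fun i => (y i : ZMod q) + x i))
  simp only [Nat.cast_add]
  rw [this]
  exact Fintype.sum_equiv (Equiv.addLeft (fun i => (y i : ZMod q))) _ _ (fun x => rfl)

/-- boundary -/
lemma shift_bdryX (k N q : ℕ) (hN : 1 ≤ N) (hqN : q ≤ N) (s : Fin k → ℕ) (hs : ∀ i, s i ≤ q)
    (g : (Fin k → ℕ) → ℂ) (hg : ∀ y, ‖g y‖ ≤ 1) :
    ‖∑ y ∈ Fintype.piFinset fun _ : Fin k => Finset.Icc 1 N, g y -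
      ∑ y ∈ Fintype.piFinset fun _ : Fin k => Finset.Icc 1 N, g (fun i => y i + s i)‖ ≤
      2 * (k * (q / N)) * N ^ k := by
  classical
  set S := Fintype.piFinset fun _ : Fin k => Finset.Icc 1 N with hS
  set T := Fintype.piFinset fun i : Fin k => Finset.Icc (1 + s i) N with hT
  have inj : Function.Injective (fun (y : Fin k → ℕ) i => y i + s i) := by
    intro x y h
    funext i
    have := congrFun h i
    simpa using this
  set S' := S.map ⟨_, inj⟩ with hS'
  have e1 : ∑ y ∈ S, g (fun i => y i + s i) = ∑ z ∈ S', g z := by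
    rw [hS', Finset.sum_map]; rfl
  have hTS : T ⊆ S := by
    intro y
    simp only [hS, hT, Fintype.mem_piFinset, Finset.mem_Icc]
    intro h i
    have := h i
    omega
  have hTS' : T ⊆ S' := by
    intro y
    simp only [hS', hS, hT, Finset.mem_map, Fintype.mem_piFinset, Finset.mem_Icc]
    intro h
    refine ⟨fun i => y i - s i, fun i => ?_, ?_⟩
    · have := h i
      simp only []
      omega
    · funext i
      have := h i
      simp only [Function.Embedding.coeFn_mk]
      omega
  have cS : S.card = N ^ k := by simp [hS]
  have cS' : S'.card = N ^ k := by rw [hS', Finset.card_map, cS]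
  have hN' : (0:ℝ) < N := by exact_mod_cast hN
  have cT : (N : ℝ) ^ k * (1 - k * (q / N)) ≤ T.card := by
    have h1 : (N - q) ^ k ≤ T.card := by
      rw [hT, Fintype.card_piFinset]
      calc (N - q) ^ k = ∏ i : Fin k, (N - q) := by simp
        _ ≤ _ := Finset.prod_le_prod' fun i _ => by
          have := hs i
          simp only [Nat.card_Icc]; omega
    have h2 : ((N : ℝ) - q) ^ k ≤ T.card := by
      rw [← Nat.cast_sub hqN]; exact_mod_cast h1
    refine le_trans ?_ h2
    have hq1 : (q : ℝ) / N ≤ 1 := (div_le_one hN').2 (by exact_mod_cast hqN)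
    have h3 := one_add_mul_le_pow (a := -((q : ℝ) / N)) (by linarith) k
    have : (N : ℝ) - q = N * (1 + -((q : ℝ) / N)) := by field_simp; ring
    rw [this, mul_pow]
    refine mul_le_mul_of_nonneg_left ?_ (by positivity)
    linarith
  have bd : ∀ U : Finset (Fin k → ℕ), T ⊆ U → U.card = N ^ k →
      ‖∑ z ∈ U \ T, g z‖ ≤ (k * (q / N)) * N ^ k := by
    intro U hU hc
    refine (norm_sum_le_of_le _ (fun z _ => hg z)).trans ?_
    rw [Finset.sum_const, nsmul_eq_mul, mul_one, Finset.card_sdiff_of_subset hU,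
      Nat.cast_sub (Finset.card_le_card hU), hc]
    push_cast
    linarith
  rw [e1, ← Finset.sum_sdiff hTS, ← Finset.sum_sdiff hTS', add_sub_add_right_eq_sub]
  refine (norm_sub_le _ _).trans ?_
  have := bd S hTS cS
  have := bd S' hTS' cS'
  linarith

/-- Riemann sum versus integral -/
lemma riemannX (k N : ℕ) (hN : 1 ≤ N) (F : (Fin k → ℝ) → ℂ) (hF : Continuous F) (δ : ℝ)
    (hδ : ∀ x y : Fin k → ℝ, (∀ i, 0 ≤ x i ∧ x i ≤ 2 * N) → (∀ i, 0 ≤ y i ∧ y i ≤ 2 * N) →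
      (∀ i, |x i - y i| ≤ 1) → ‖F x - F y‖ ≤ δ) :
    ‖((N : ℂ) ^ k)⁻¹ * (∑ y ∈ Fintype.piFinset fun _ : Fin k => Finset.Icc 1 N, F (fun i => (y i : ℝ)))
      - ∫ y in {y : Fin k → ℝ | ∀ i, y i ∈ Set.Icc (0 : ℝ) 1}, F (fun i => N * y i)‖ ≤ δ := by
  classical
  have hN' : (0:ℝ) < N := by exact_mod_cast hN
  set S := Fintype.piFinset fun _ : Fin k => Finset.Icc 1 N with hS
  let Q : (Fin k → ℕ) → Set (Fin k → ℝ) := fun y =>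
    Set.pi Set.univ fun i => Set.Ioc (((y i : ℝ) - 1) / N) ((y i : ℝ) / N)
  have hQm : ∀ y, MeasurableSet (Q y) := fun y => MeasurableSet.univ_pi fun i => measurableSet_Ioc
  have hQv : ∀ y, MeasureTheory.volume.real (Q y) = ((N : ℝ) ^ k)⁻¹ := by
    intro y
    rw [MeasureTheory.measureReal_def, Real.volume_pi_Ioc, ENNReal.toReal_prod]
    have : ∀ i : Fin k, (y i : ℝ) / N - ((y i : ℝ) - 1) / N = (N : ℝ)⁻¹ := by
      intro i; field_simp; ring
    simp only [this, ENNReal.toReal_ofReal (inv_nonneg.2 hN'.le)]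
    simp
  have hQf : ∀ y, MeasureTheory.volume (Q y) < ⊤ := by
    intro y
    rw [Real.volume_pi_Ioc]
    exact ENNReal.prod_lt_top fun i _ => ENNReal.ofReal_lt_top
  have hset : {y : Fin k → ℝ | ∀ i, y i ∈ Set.Icc (0 : ℝ) 1} =
      Set.Icc (fun _ : Fin k => (0 : ℝ)) (fun _ => 1) := by
    ext y; simp [Pi.le_def, forall_and]
  have hun : (Set.pi Set.univ fun _ : Fin k => Set.Ioc (0 : ℝ) 1) = ⋃ y ∈ S, Q y := by
    ext u
    simp only [Set.mem_pi, Set.mem_univ, true_imp_iff, Set.mem_iUnion, hS, Q, Fintype.mem_piFinset,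
      Finset.mem_Icc, exists_prop, Set.mem_Ioc]
    constructor
    · intro h
      refine ⟨fun i => ⌈(N : ℝ) * u i⌉₊, fun i => ⟨?_, ?_⟩, fun i => ⟨?_, ?_⟩⟩
      · exact Nat.one_le_iff_ne_zero.2 (Nat.ceil_pos.2 (mul_pos hN' (h i).1)).ne'
      · exact Nat.ceil_le.2 (mul_le_of_le_one_right hN'.le (h i).2)
      · rw [div_lt_iff₀ hN']
        have := Nat.ceil_lt_add_one (mul_pos hN' (h i).1).le
        linarith
      · rw [le_div_iff₀ hN', mul_comm]
        exact Nat.le_ceil _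
    · rintro ⟨y, hy, h⟩ i
      have h1 : (1:ℝ) ≤ y i := by exact_mod_cast (hy i).1
      have h2 : (y i : ℝ) ≤ N := by exact_mod_cast (hy i).2
      exact ⟨lt_of_le_of_lt (div_nonneg (by linarith) hN'.le) (h i).1,
        (h i).2.trans ((div_le_one hN').2 h2)⟩
  have hdis : (S : Set (Fin k → ℕ)).Pairwise (Function.onFun Disjoint Q) := by
    intro y _ z _ hyz
    rw [Function.onFun, Set.disjoint_left]
    intro u hu hv
    apply hyz
    funext i
    have h1 := hu i (Set.mem_univ _)
    have h2 := hv i (Set.mem_univ _)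
    simp only [Set.mem_Ioc, div_lt_iff₀ hN', le_div_iff₀ hN'] at h1 h2
    have h3 : (y i : ℝ) < z i + 1 := by linarith
    have h4 : (z i : ℝ) < y i + 1 := by linarith
    have h3' : y i < z i + 1 := by exact_mod_cast h3
    have h4' : z i < y i + 1 := by exact_mod_cast h4
    omega
  have hc : Continuous fun y : Fin k → ℝ => F (fun i => N * y i) := by fun_prop
  have hint : ∀ y, MeasureTheory.IntegrableOn (fun y : Fin k → ℝ => F (fun i => N * y i)) (Q y) := by
    intro y
    refine MeasureTheory.IntegrableOn.mono_set (t := Set.pi Set.univ fun i => Set.Icc (((y i : ℝ) - 1) / N) ((y i : ℝ) / N)) ?_ ?_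
    · exact hc.continuousOn.integrableOn_compact (isCompact_univ_pi fun i => isCompact_Icc)
    · exact Set.pi_mono fun i _ => Set.Ioc_subset_Icc_self
  have hae : (Set.pi Set.univ fun _ : Fin k => Set.Ioc (0 : ℝ) 1) =ᵐ[MeasureTheory.volume]
      Set.Icc (fun _ : Fin k => (0 : ℝ)) (fun _ => 1) :=
    (MeasureTheory.Measure.univ_pi_Ioc_ae_eq_Icc (μ := fun _ : Fin k => (MeasureTheory.volume : MeasureTheory.Measure ℝ))
      (f := fun _ => (0:ℝ)) (g := fun _ => (1:ℝ)))
  rw [hset, ← MeasureTheory.setIntegral_congr_set hae, hun,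
    MeasureTheory.integral_biUnion_finset S (fun y _ => hQm y) hdis (fun y _ => hint y),
    Finset.mul_sum, ← Finset.sum_sub_distrib]
  have hcard : (S.card : ℝ) = N ^ k := by simp [hS]
  have hterm : ∀ y ∈ S, ‖((N : ℂ) ^ k)⁻¹ * F (fun i => (y i : ℝ)) -
      ∫ u in Q y, F (fun i => N * u i)‖ ≤ δ * ((N : ℝ) ^ k)⁻¹ := by
    intro y hy
    simp only [hS, Fintype.mem_piFinset, Finset.mem_Icc] at hy
    have e : ((N : ℂ) ^ k)⁻¹ * F (fun i => (y i : ℝ)) = ∫ u in Q y, F (fun i => (y i : ℝ)) := by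
      rw [MeasureTheory.setIntegral_const, hQv]
      simp
    have hci : MeasureTheory.IntegrableOn (fun _ : Fin k → ℝ => F (fun i => (y i : ℝ))) (Q y) :=
      MeasureTheory.integrableOn_const (hQf y).ne (by simp)
    rw [e, ← MeasureTheory.integral_sub hci.integrable (hint y).integrable, ← hQv y]
    refine MeasureTheory.norm_setIntegral_le_of_norm_le_const (hQf y) ?_
    intro u hu
    have hu' : ∀ i, (y i : ℝ) - 1 < N * u i ∧ N * u i ≤ y i := by
      intro i
      have h1 := hu i (Set.mem_univ _)
      simp only [Set.mem_Ioc, div_lt_iff₀ hN', le_div_iff₀ hN'] at h1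
      constructor <;> linarith
    have hyr : ∀ i, (1:ℝ) ≤ y i ∧ (y i : ℝ) ≤ N := fun i =>
      ⟨by exact_mod_cast (hy i).1, by exact_mod_cast (hy i).2⟩
    refine hδ _ _ (fun i => ?_) (fun i => ?_) (fun i => ?_)
    · have := hyr i
      constructor <;> linarith
    · have := hyr i
      have := hu' i
      constructor <;> linarith
    · have := hu' i
      rw [abs_le]
      constructor <;> linarith
  refine (norm_sum_le_of_le _ hterm).trans (le_of_eq ?_)
  rw [Finset.sum_const, nsmul_eq_mul, hcard]
  field_simp

lemma shift_avgX (k N₀ N q : ℕ) (hN : 1 ≤ N) (hq : 1 ≤ q) (hqN : q ≤ N) (a : Gam k N₀ → ℕ)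
    (ξ θ : Gam k N₀ → ℝ) (hθ : θ = fun γ => ξ γ - (a γ : ℝ) / q) (δ : ℝ)
    (hδ : ∀ x y : Fin k → ℝ, (∀ i, 0 ≤ x i ∧ x i ≤ 2 * N) → (∀ i, 0 ≤ y i ∧ y i ≤ 2 * N) →
      (∀ i, |x i - y i| ≤ q) → ‖evX k N₀ θ x - evX k N₀ θ y‖ ≤ δ) :
    ‖mAvg k N₀ N ξ - gaussSumCan k N₀ q a * (((N : ℂ) ^ k)⁻¹ *
      (∑ y ∈ Fintype.piFinset fun _ : Fin k => Finset.Icc 1 N, evX k N₀ θ (fun i => (y i : ℝ))))‖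
      ≤ 2 * (k * (q / N)) + δ := by
  have hN' : (0:ℝ) < N := by exact_mod_cast hN
  have hq' : (0:ℝ) < q := by exact_mod_cast hq
  have hNc : (N : ℂ) ≠ 0 := by exact_mod_cast hN'.ne'
  have hqc : (q : ℂ) ≠ 0 := by exact_mod_cast hq'.ne'
  set S := Fintype.piFinset fun _ : Fin k => Finset.Icc 1 N with hS
  set R := Fintype.piFinset fun _ : Fin k => Finset.Icc 1 q with hR
  have hRc : (R.card : ℝ) = q ^ k := by simp [hR]
  have hSc : (S.card : ℝ) = N ^ k := by simp [hS]
  let c : (Fin k → ℕ) → ℂ := fun y => evX k N₀ (fun γ => (a γ : ℝ) / q) (fun i => (y i : ℝ))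
  let f : (Fin k → ℕ) → ℂ := fun y => evX k N₀ θ (fun i => (y i : ℝ))
  have hg : ∀ y : Fin k → ℕ, evX k N₀ ξ (fun i => (y i : ℝ)) = c y * f y := by
    intro y
    simp only [c, f]
    rw [← evX_add, hθ]
    congr 1
    funext γ
    ring
  have hm : mAvg k N₀ N ξ = ((N : ℂ) ^ k)⁻¹ * ((q : ℂ) ^ k)⁻¹ * ∑ s ∈ R, ∑ y ∈ S, c y * f y := by
    rw [Finset.sum_const, nsmul_eq_mul]
    have : (R.card : ℂ) = q ^ k := by exact_mod_cast hRc
    rw [this]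
    have : mAvg k N₀ N ξ = ((N : ℂ) ^ k)⁻¹ * ∑ y ∈ S, evX k N₀ ξ (fun i => (y i : ℝ)) := rfl
    rw [this, Finset.sum_congr rfl (fun y _ => hg y)]
    field_simp
  have hG : gaussSumCan k N₀ q a * (((N : ℂ) ^ k)⁻¹ * ∑ y ∈ S, f y) =
      ((N : ℂ) ^ k)⁻¹ * ((q : ℂ) ^ k)⁻¹ * ∑ s ∈ R, ∑ y ∈ S, c (fun i => y i + s i) * f y := by
    rw [Finset.sum_comm]
    have h1 : ∀ y ∈ S, ∑ s ∈ R, c (fun i => y i + s i) * f y = (∑ s ∈ R, c s) * f y := by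
      intro y _
      rw [← Finset.sum_mul]
      congr 1
      exact sum_shiftX k N₀ q hq a y
    rw [Finset.sum_congr rfl h1, ← Finset.mul_sum]
    have : gaussSumCan k N₀ q a = ((q : ℂ) ^ k)⁻¹ * ∑ s ∈ R, c s := rfl
    rw [this]
    ring
  have key : ∀ s ∈ R, ‖∑ y ∈ S, c y * f y - ∑ y ∈ S, c (fun i => y i + s i) * f y‖ ≤
      (2 * (k * (q / N)) + δ) * N ^ k := by
    intro s hs
    simp only [hR, Fintype.mem_piFinset, Finset.mem_Icc] at hs
    have h1 := shift_bdryX k N q hN hqN s (fun i => (hs i).2) (fun y => c y * f y) (by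
      intro y
      simp only [c, f, norm_mul, evX_norm, mul_one, le_refl])
    have h2 : ‖∑ y ∈ S, c (fun i => y i + s i) * f (fun i => y i + s i) -
        ∑ y ∈ S, c (fun i => y i + s i) * f y‖ ≤ δ * N ^ k := by
      rw [← Finset.sum_sub_distrib]
      have : ∀ y ∈ S, ‖c (fun i => y i + s i) * f (fun i => y i + s i) -
          c (fun i => y i + s i) * f y‖ ≤ δ := by
        intro y hy
        simp only [hS, Fintype.mem_piFinset, Finset.mem_Icc] at hy
        rw [← mul_sub, norm_mul]
        simp only [c, evX_norm, one_mul, f]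
        have hy1 : ∀ i, (1:ℝ) ≤ y i ∧ (y i : ℝ) ≤ N := fun i =>
          ⟨by exact_mod_cast (hy i).1, by exact_mod_cast (hy i).2⟩
        have hs1 : ∀ i, (1:ℝ) ≤ s i ∧ (s i : ℝ) ≤ q := fun i =>
          ⟨by exact_mod_cast (hs i).1, by exact_mod_cast (hs i).2⟩
        have hqN' : (q : ℝ) ≤ N := by exact_mod_cast hqN
        refine hδ _ _ (fun i => ?_) (fun i => ?_) (fun i => ?_)
        · have := hy1 i
          have := hs1 i
          push_cast
          constructor <;> linarith
        · have := hy1 i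
          constructor <;> linarith
        · have := hs1 i
          push_cast
          rw [abs_le]
          constructor <;> linarith
      refine (norm_sum_le_of_le _ this).trans (le_of_eq ?_)
      rw [Finset.sum_const, nsmul_eq_mul, hSc, mul_comm]
    refine (norm_sub_le_norm_sub_add_norm_sub _ (∑ y ∈ S, c (fun i => y i + s i) * f (fun i => y i + s i)) _).trans ?_
    have h1' : ‖∑ y ∈ S, c y * f y - ∑ y ∈ S, c (fun i => y i + s i) * f (fun i => y i + s i)‖ ≤ _ := h1
    linarith
  have hG' : gaussSumCan k N₀ q a * (((N : ℂ) ^ k)⁻¹ * ∑ y ∈ S, evX k N₀ θ (fun i => (y i : ℝ))) = _ := hG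
  rw [hm, hG', ← mul_sub, ← Finset.sum_sub_distrib, norm_mul]
  have h3 := norm_sum_le_of_le _ key
  rw [Finset.sum_const, nsmul_eq_mul, hRc] at h3
  have h4 : ‖((N : ℂ) ^ k)⁻¹ * ((q : ℂ) ^ k)⁻¹‖ = ((N:ℝ) ^ k)⁻¹ * ((q:ℝ) ^ k)⁻¹ := by simp
  rw [h4]
  refine (mul_le_mul_of_nonneg_left h3 (by positivity)).trans (le_of_eq ?_)
  field_simp

lemma gauss_leX (k N₀ q : ℕ) (hq : 1 ≤ q) (a : Gam k N₀ → ℕ) : ‖gaussSumCan k N₀ q a‖ ≤ 1 := by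
  have hq' : (0:ℝ) < q := by exact_mod_cast hq
  have : gaussSumCan k N₀ q a = ((q : ℂ) ^ k)⁻¹ *
    ∑ r ∈ Fintype.piFinset fun _ : Fin k => Finset.Icc 1 q,
      evX k N₀ (fun γ => (a γ : ℝ) / q) (fun i => (r i : ℝ)) := rfl
  rw [this, norm_mul]
  have h := norm_sum_le_of_le (Fintype.piFinset fun _ : Fin k => Finset.Icc 1 q)
    (fun r _ => (evX_norm k N₀ (fun γ => (a γ : ℝ) / q) (fun i => (r i : ℝ))).le)
  have h4 : ‖((q : ℂ) ^ k)⁻¹‖ = ((q:ℝ) ^ k)⁻¹ := by simp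
  rw [h4]
  refine (mul_le_mul_of_nonneg_left h (by positivity)).trans (le_of_eq ?_)
  simp
  field_simp

/-- **Proposition 4.1 (Gaussian-sum approximation of the averaging multiplier).** -/
theorem statement16 (k N₀ : ℕ) (hk : 1 ≤ k) (hN₀ : 1 ≤ N₀) :
    ∃ C : ℝ, 0 < C ∧
      ∀ N : ℕ, 1 ≤ N → ∀ L₁ L₂ L₃ : ℝ, (N : ℝ) ≤ L₁ → 1 ≤ L₂ → L₃ ≤ Real.sqrt N →
      ∀ q : ℕ, 1 ≤ q → (q : ℝ) ≤ L₃ →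
      ∀ a : Gam k N₀ → ℕ, (∀ γ, 1 ≤ a γ ∧ a γ ≤ q) →
        Nat.gcd q (Finset.univ.gcd a) = 1 →
      ∀ ξ : Gam k N₀ → ℝ, (∀ γ, -(1 / 2) ≤ ξ γ ∧ ξ γ < 1 / 2) →
        (∀ γ : Gam k N₀,
          |ξ γ - (a γ : ℝ) / q| ≤
            L₂ / L₁ ^ (∑ i, ((γ : Fin k → Fin (N₀ + 1)) i : ℕ))) →
        ‖mAvg k N₀ N ξ - gaussSumCan k N₀ q a * PhiAvg k N₀ N (fun γ => ξ γ - (a γ : ℝ) / q)‖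
            ≤ C * (L₃ / N + L₂ * L₃ / N *
              ∑ γ : Gam k N₀, ((N : ℝ) / L₁) ^ (∑ i, ((γ : Fin k → Fin (N₀ + 1)) i : ℕ))) ∧
        ‖mAvg k N₀ N ξ - gaussSumCan k N₀ q a * PhiAvg k N₀ N (fun γ => ξ γ - (a γ : ℝ) / q)‖
            ≤ C * (L₂ * L₃ / N) := by
  set B : ℝ := 2 * Real.pi * (k * N₀) * 2 ^ (k * N₀) with hB
  have hB0 : 0 ≤ B := by positivity
  have hk' : (1:ℝ) ≤ k := by exact_mod_cast hk
  have hd0 : (0:ℝ) ≤ Fintype.card (Gam k N₀) := Nat.cast_nonneg _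
  refine ⟨(2 * k + 2 * B) * (1 + Fintype.card (Gam k N₀)), by positivity, ?_⟩
  intro N hN L₁ L₂ L₃ hL₁ hL₂ hL₃ q hq hqL a ha _ ξ _ hξ
  have hN' : (1:ℝ) ≤ N := by exact_mod_cast hN
  have hL : 0 < L₁ := by linarith
  have hL₃0 : 0 ≤ L₃ := le_trans (Nat.cast_nonneg q) hqL
  have hqN : q ≤ N := by
    have h1 : Real.sqrt N ≤ N := Real.sqrt_le_self_iff.2 (Or.inr hN')
    have : (q : ℝ) ≤ N := by linarith
    exact_mod_cast this
  have hq1 : (1:ℝ) ≤ q := by exact_mod_cast hq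
  let θ : Gam k N₀ → ℝ := fun γ => ξ γ - (a γ : ℝ) / q
  let sG : ℝ := ∑ γ : Gam k N₀, ((N : ℝ) / L₁) ^ degX γ
  have hsG0 : 0 ≤ sG := Finset.sum_nonneg fun γ _ => by positivity
  have hsG1 : sG ≤ Fintype.card (Gam k N₀) := by
    refine (Finset.sum_le_card_nsmul _ _ 1 fun γ _ => ?_).trans (by simp)
    exact pow_le_one₀ (by positivity) ((div_le_one hL).2 hL₁)
  have lip := fun (h : ℝ) (hh : 0 ≤ h) x y =>
    evX_lip k N₀ N hN L₁ L₂ h hL₁ hL₂ hh θ hξ x y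
  have h1 := shift_avgX k N₀ N q hN hq hqN a ξ θ rfl _ (lip q (by linarith))
  have h2 := riemannX k N hN (evX k N₀ θ) (evX_cont k N₀ θ) _ (lip 1 zero_le_one)
  have hG := gauss_leX k N₀ q hq a
  have main : ‖mAvg k N₀ N ξ - gaussSumCan k N₀ q a * PhiAvg k N₀ N θ‖ ≤
      (2 * k + 2 * B) * (L₃ / N + L₂ * L₃ / N * sG) := by
    set A := ((N : ℂ) ^ k)⁻¹ * (∑ y ∈ Fintype.piFinset fun _ : Fin k => Finset.Icc 1 N,
      evX k N₀ θ (fun i => (y i : ℝ)))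
    have h2' : ‖A - PhiAvg k N₀ N θ‖ ≤ B * (L₂ * sG) * (1 / N) := h2
    have h1' : ‖mAvg k N₀ N ξ - gaussSumCan k N₀ q a * A‖ ≤
      2 * (k * (q / N)) + B * (L₂ * sG) * (q / N) := h1
    have h3 : ‖gaussSumCan k N₀ q a * A - gaussSumCan k N₀ q a * PhiAvg k N₀ N θ‖ ≤
        B * (L₂ * sG) * (1 / N) := by
      rw [← mul_sub, norm_mul]
      exact (mul_le_of_le_one_left (norm_nonneg _) hG).trans h2'
    have h4 := norm_sub_le_norm_sub_add_norm_sub (mAvg k N₀ N ξ) (gaussSumCan k N₀ q a * A)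
      (gaussSumCan k N₀ q a * PhiAvg k N₀ N θ)
    have h5 : (q : ℝ) / N ≤ L₃ / N := by gcongr
    have h6 : (1 : ℝ) / N ≤ L₃ / N := by gcongr; linarith
    have hL₂0 : 0 ≤ L₂ := by linarith
    have hE : 0 ≤ B * (L₂ * sG) := by positivity
    have h7 := mul_le_mul_of_nonneg_left h5 hE
    have h8 := mul_le_mul_of_nonneg_left h6 hE
    have h9 := mul_le_mul_of_nonneg_left h5 (by positivity : (0:ℝ) ≤ k)
    have h10 : 0 ≤ B * (L₃ / N) := by positivity
    have h11 : 0 ≤ k * (L₂ * L₃ / N * sG) := by positivity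
    have e : B * (L₂ * sG) * (L₃ / N) = B * (L₂ * L₃ / N * sG) := by ring
    rw [e] at h7 h8
    linarith
  have hL₂0 : 0 ≤ L₂ := by linarith
  have hX0 : 0 ≤ L₃ / N := by positivity
  have hY0 : 0 ≤ L₂ * L₃ / N := by positivity
  have hK0 : 0 ≤ 2 * k + 2 * B := by positivity
  constructor
  · refine main.trans ?_
    change _ ≤ (2 * k + 2 * B) * (1 + (Fintype.card (Gam k N₀) : ℝ)) * (L₃ / N + L₂ * L₃ / N * sG)
    have : 0 ≤ L₃ / N + L₂ * L₃ / N * sG := by positivity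
    refine mul_le_mul_of_nonneg_right ?_ this
    exact le_mul_of_one_le_right hK0 (by linarith)
  · refine main.trans ?_
    rw [mul_assoc]
    refine mul_le_mul_of_nonneg_left ?_ hK0
    have h1 : L₃ / N ≤ L₂ * L₃ / N := by
      rw [mul_div_assoc]; exact le_mul_of_one_le_left hX0 hL₂
    have h2 := mul_le_mul_of_nonneg_left hsG1 hY0
    linarith

end
end
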